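/- arXiv:0802.3149 — 9 statements merged into one kernel-verified Lean document; each statement's English description precedes it below -/
import Mathlib

section
/- Let d ≥ 7 and let A, B be binary forms of order 7 (homogeneous polynomials of degree 7 in x₁, x₂ over a field of characteristic zero). Writing 𝒞_q = (A,B)_q for the q-th transvectant of A and B, the identity 𝒞₁·𝒞₅ = −(21/2)·(𝒞₁,𝒞₁)₄ + (84/11)·(𝒞₁,𝒞₃)₂ + (735/484)·𝒞₃² holds. -/
open MvPolynomial Finset

/-!
By Euler's identity, multiplying the `q`-th transvectant of two binary forms by `x₁^q` removes all
the `x₁`-derivatives (and the `x₂` that Euler's identity introduces cancels): the result is a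
constant-coefficient bilinear expression in the pure `x₂`-derivatives of the two forms. This is the
transvectant of the dehomogenized forms; see `transvectant_one`, …, `transvectant_five` for the
orders needed here. Since `x₁` is a constant for `∂/∂x₂`, these expressions can be differentiated
in `x₂`, which gives the derivatives of `𝒞₁` and `𝒞₃` as polynomials in the `x₂`-derivatives of
`A` and `B`. After multiplication by `x₁^6` the claim becomes an identity between polynomials in
`∂₂^i A`, `∂₂^j B` with `i, j ≤ 5`, which holds formally (`jet_identity`), and `x₁^6` is cancelled.
-/

/-- The `q`-th transvectant of two binary forms of orders `m` and `n`:
`(F,G)_q = ((m−q)!(n−q)!/(m!·n!)) · Σ_{i=0}^{q} (−1)^i C(q,i)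
  (∂^q F/∂x₁^{q−i}∂x₂^{i}) (∂^q G/∂x₁^{i}∂x₂^{q−i})`. -/
noncomputable def transvectant {k : Type*} [Field k] [CharZero k]
    (m n q : ℕ) (F G : MvPolynomial (Fin 2) k) : MvPolynomial (Fin 2) k :=
  C ((((m - q).factorial * (n - q).factorial : ℕ) : k) /
      ((m.factorial * n.factorial : ℕ) : k)) *
    ∑ i ∈ Finset.range (q + 1),
      C ((-1 : k) ^ i * (q.choose i : k)) *
        ((fun P => pderiv (0 : Fin 2) P)^[q - i] ((fun P => pderiv (1 : Fin 2) P)^[i] F)) *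
        ((fun P => pderiv (0 : Fin 2) P)^[i] ((fun P => pderiv (1 : Fin 2) P)^[q - i] G))

section Syzygy

variable {k : Type*} [Field k]

theorem pderiv_zero_one_comm (F : MvPolynomial (Fin 2) k) :
    pderiv 1 (pderiv 0 F) = pderiv 0 (pderiv 1 F) := by
  -- the commutator of two derivations is a derivation, and it vanishes on the variables
  have h : ⁅(pderiv 1 : Derivation k (MvPolynomial (Fin 2) k) (MvPolynomial (Fin 2) k)),
      (pderiv 0 : Derivation k (MvPolynomial (Fin 2) k) (MvPolynomial (Fin 2) k))⁆ = 0 := by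
    apply MvPolynomial.derivation_ext
    intro i
    fin_cases i <;> simp [Derivation.commutator_apply, pderiv_X]
  have h2 := congrArg (fun D => D F) h
  simpa [Derivation.commutator_apply, sub_eq_zero] using h2

/-- The mixed derivative `∂₁^j ∂₂^i F` scaled by `x₁^j`, which is the power that Euler's identity
needs to trade the `x₁`-derivatives for `x₂`-derivatives. -/
noncomputable def jet (F : MvPolynomial (Fin 2) k) (j i : ℕ) : MvPolynomial (Fin 2) k :=
  X 0 ^ j * (fun P => pderiv (0 : Fin 2) P)^[j] ((fun P => pderiv (1 : Fin 2) P)^[i] F)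

theorem isHomogeneous_iterate_pderiv {F : MvPolynomial (Fin 2) k} {m : ℕ}
    (hF : F.IsHomogeneous m) (s : Fin 2) (i : ℕ) :
    ((fun P => pderiv s P)^[i] F).IsHomogeneous (m - i) := by
  induction i with
  | zero => simpa using hF
  | succ i ih =>
    rw [Function.iterate_succ_apply', ← Nat.sub_sub]
    exact ih.pderiv

theorem pderiv_one_iterate_pderiv_zero (F : MvPolynomial (Fin 2) k) (j : ℕ) :
    pderiv 1 ((fun P => pderiv (0 : Fin 2) P)^[j] F) =
      (fun P => pderiv (0 : Fin 2) P)^[j] (pderiv 1 F) := by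
  induction j with
  | zero => rfl
  | succ j ih =>
    rw [Function.iterate_succ_apply', Function.iterate_succ_apply', pderiv_zero_one_comm, ih]

/-- Euler's identity for `∂₁^j ∂₂^i F`, used to lower the number of `x₁`-derivatives. -/
theorem jet_succ {F : MvPolynomial (Fin 2) k} {m : ℕ} (hF : F.IsHomogeneous m) (j i : ℕ) :
    jet F (j + 1) i = ((m - i - j : ℕ) : MvPolynomial (Fin 2) k) * jet F j i
      - X 1 * jet F j (i + 1) := by
  have h := (isHomogeneous_iterate_pderiv (isHomogeneous_iterate_pderiv hF 1 i) 0 j).sum_X_mul_pderiv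
  rw [Fin.sum_univ_two, pderiv_one_iterate_pderiv_zero, nsmul_eq_mul] at h
  simp only [jet, Function.iterate_succ_apply']
  linear_combination (X 0 ^ j) * h

theorem pderiv_one_jet (F : MvPolynomial (Fin 2) k) (i : ℕ) :
    pderiv 1 (jet F 0 i) = jet F 0 (i + 1) := by
  simp only [jet, pow_zero, one_mul, Function.iterate_zero, id, Function.iterate_succ_apply']

theorem natCast_mul_C_eq_one (N : ℕ) (c : k) (h : (N : k) * c = 1) :
    (N : MvPolynomial (Fin 2) k) * C c = 1 := by
  rw [← map_natCast (C : k →+* MvPolynomial (Fin 2) k), ← C_mul, h, C_1]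

variable [CharZero k]

theorem X_pow_mul_transvectant (m n q : ℕ) (F G : MvPolynomial (Fin 2) k) :
    X 0 ^ q * transvectant m n q F G =
      C ((((m - q).factorial * (n - q).factorial : ℕ) : k) /
        ((m.factorial * n.factorial : ℕ) : k)) *
      ∑ i ∈ Finset.range (q + 1),
        C ((-1 : k) ^ i * (q.choose i : k)) * jet F (q - i) i * jet G i (q - i) := by
  rw [transvectant, mul_left_comm, Finset.mul_sum]
  congr 1
  refine Finset.sum_congr rfl fun i hi => ?_
  have hq : q = (q - i) + i := by have := Finset.mem_range.mp hi; omega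
  have hX : (X 0 : MvPolynomial (Fin 2) k) ^ q = X 0 ^ (q - i) * X 0 ^ i := by
    rw [← pow_add, ← hq]
  rw [hX, jet, jet]
  ring

theorem isHomogeneous_transvectant {m n q : ℕ} {F G : MvPolynomial (Fin 2) k}
    (hF : F.IsHomogeneous m) (hG : G.IsHomogeneous n) :
    (transvectant m n q F G).IsHomogeneous ((m - q) + (n - q)) := by
  rw [transvectant, ← zero_add (m - q + (n - q))]
  refine (isHomogeneous_C _ _).mul (IsHomogeneous.sum _ _ _ fun i hi => ?_)
  have hi := Finset.mem_range.mp hi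
  have h1 := isHomogeneous_iterate_pderiv (isHomogeneous_iterate_pderiv hF 1 i) 0 (q - i)
  have h2 := isHomogeneous_iterate_pderiv (isHomogeneous_iterate_pderiv hG 1 (q - i)) 0 i
  rw [show m - i - (q - i) = m - q by omega] at h1
  rw [show n - (q - i) - i = n - q by omega] at h2
  rw [← zero_add (m - q)]
  exact ((isHomogeneous_C _ _).mul h1).mul h2

theorem transvectant_one {F G : MvPolynomial (Fin 2) k}
    (hF : F.IsHomogeneous 7) (hG : G.IsHomogeneous 7) :
    7 * X 0 * transvectant 7 7 1 F G = jet F 0 0 * jet G 0 1 - jet F 0 1 * jet G 0 0 := by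
  have h := X_pow_mul_transvectant 7 7 1 F G
  have hc := natCast_mul_C_eq_one (k := k) 49
    ((((7 - 1).factorial * (7 - 1).factorial : ℕ) : k) / ((Nat.factorial 7 * Nat.factorial 7 : ℕ) : k))
    (by norm_num [Nat.factorial])
  generalize C ((((7 - 1).factorial * (7 - 1).factorial : ℕ) : k) /
    ((Nat.factorial 7 * Nat.factorial 7 : ℕ) : k)) = c at h hc
  simp [Finset.sum_range_succ, jet_succ hF, jet_succ hG, Nat.choose] at h hc
  linear_combination 7 * h + (jet F 0 0 * jet G 0 1 - jet F 0 1 * jet G 0 0) * hc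

theorem transvectant_three {F G : MvPolynomial (Fin 2) k}
    (hF : F.IsHomogeneous 7) (hG : G.IsHomogeneous 7) :
    1470 * X 0 ^ 3 * transvectant 7 7 3 F G =
      7 * (jet F 0 0 * jet G 0 3 - jet F 0 3 * jet G 0 0)
        - 15 * (jet F 0 1 * jet G 0 2 - jet F 0 2 * jet G 0 1) := by
  have h := X_pow_mul_transvectant 7 7 3 F G
  have hc := natCast_mul_C_eq_one (k := k) 44100
    ((((7 - 3).factorial * (7 - 3).factorial : ℕ) : k) / ((Nat.factorial 7 * Nat.factorial 7 : ℕ) : k))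
    (by norm_num [Nat.factorial])
  generalize C ((((7 - 3).factorial * (7 - 3).factorial : ℕ) : k) /
    ((Nat.factorial 7 * Nat.factorial 7 : ℕ) : k)) = c at h hc
  simp [Finset.sum_range_succ, jet_succ hF, jet_succ hG, Nat.choose] at h hc
  linear_combination 1470 * h + (7 * (jet F 0 0 * jet G 0 3 - jet F 0 3 * jet G 0 0)
        - 15 * (jet F 0 1 * jet G 0 2 - jet F 0 2 * jet G 0 1)) * hc

theorem transvectant_five {F G : MvPolynomial (Fin 2) k}
    (hF : F.IsHomogeneous 7) (hG : G.IsHomogeneous 7) :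
    17640 * X 0 ^ 5 * transvectant 7 7 5 F G =
      7 * (jet F 0 0 * jet G 0 5 - jet F 0 5 * jet G 0 0)
        - 15 * (jet F 0 1 * jet G 0 4 - jet F 0 4 * jet G 0 1)
        + 20 * (jet F 0 2 * jet G 0 3 - jet F 0 3 * jet G 0 2) := by
  have h := X_pow_mul_transvectant 7 7 5 F G
  have hc := natCast_mul_C_eq_one (k := k) 6350400
    ((((7 - 5).factorial * (7 - 5).factorial : ℕ) : k) / ((Nat.factorial 7 * Nat.factorial 7 : ℕ) : k))
    (by norm_num [Nat.factorial])
  generalize C ((((7 - 5).factorial * (7 - 5).factorial : ℕ) : k) /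
    ((Nat.factorial 7 * Nat.factorial 7 : ℕ) : k)) = c at h hc
  simp [Finset.sum_range_succ, jet_succ hF, jet_succ hG, Nat.choose] at h hc
  linear_combination 17640 * h + (7 * (jet F 0 0 * jet G 0 5 - jet F 0 5 * jet G 0 0)
        - 15 * (jet F 0 1 * jet G 0 4 - jet F 0 4 * jet G 0 1)
        + 20 * (jet F 0 2 * jet G 0 3 - jet F 0 3 * jet G 0 2)) * hc

theorem transvectant_four {F : MvPolynomial (Fin 2) k} (hF : F.IsHomogeneous 12) :
    130680 * X 0 ^ 4 * transvectant 12 12 4 F F =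
      22 * (jet F 0 0 * jet F 0 4) - 66 * (jet F 0 1 * jet F 0 3) + 45 * jet F 0 2 ^ 2 := by
  have h := X_pow_mul_transvectant 12 12 4 F F
  have hc := natCast_mul_C_eq_one (k := k) 141134400
    ((((12 - 4).factorial * (12 - 4).factorial : ℕ) : k) /
      ((Nat.factorial 12 * Nat.factorial 12 : ℕ) : k))
    (by norm_num [Nat.factorial])
  generalize C ((((12 - 4).factorial * (12 - 4).factorial : ℕ) : k) /
    ((Nat.factorial 12 * Nat.factorial 12 : ℕ) : k)) = c at h hc
  simp [Finset.sum_range_succ, jet_succ hF, Nat.choose] at h hc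
  linear_combination 130680 * h + (22 * (jet F 0 0 * jet F 0 4) - 66 * (jet F 0 1 * jet F 0 3)
    + 45 * jet F 0 2 ^ 2) * hc

theorem transvectant_two {F G : MvPolynomial (Fin 2) k}
    (hF : F.IsHomogeneous 12) (hG : G.IsHomogeneous 8) :
    3696 * X 0 ^ 2 * transvectant 12 8 2 F G =
      66 * (jet F 0 0 * jet G 0 2) - 77 * (jet F 0 1 * jet G 0 1)
        + 28 * (jet F 0 2 * jet G 0 0) := by
  have h := X_pow_mul_transvectant 12 8 2 F G
  have hc := natCast_mul_C_eq_one (k := k) 7392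
    ((((12 - 2).factorial * (8 - 2).factorial : ℕ) : k) /
      ((Nat.factorial 12 * Nat.factorial 8 : ℕ) : k))
    (by norm_num [Nat.factorial])
  generalize C ((((12 - 2).factorial * (8 - 2).factorial : ℕ) : k) /
    ((Nat.factorial 12 * Nat.factorial 8 : ℕ) : k)) = c at h hc
  simp [Finset.sum_range_succ, jet_succ hF, jet_succ hG, Nat.choose] at h hc
  linear_combination 3696 * h + (66 * (jet F 0 0 * jet G 0 2) - 77 * (jet F 0 1 * jet G 0 1)
        + 28 * (jet F 0 2 * jet G 0 0)) * hc

/-- The syzygy as a formal identity: `fᵢ`, `gᵢ`, `uᵢ`, `vᵢ` stand for the `i`-th `x₂`-derivatives of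
`A`, `B`, `𝒞₁`, `𝒞₃`, and `w`, `s`, `t` for `𝒞₅`, `(𝒞₁,𝒞₁)₄`, `(𝒞₁,𝒞₃)₂`. -/
theorem jet_identity {L : Type*} [Field L] [CharZero L]
    (x f0 f1 f2 f3 f4 f5 g0 g1 g2 g3 g4 g5 u0 u1 u2 u3 u4 v0 v1 v2 w s t : L) (hx : x ≠ 0)
    (hu0 : 7 * x * u0 = f0 * g1 - f1 * g0)
    (hu1 : 7 * x * u1 = f0 * g2 - f2 * g0)
    (hu2 : 7 * x * u2 = f0 * g3 + f1 * g2 - f2 * g1 - f3 * g0)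
    (hu3 : 7 * x * u3 = f0 * g4 + 2 * (f1 * g3 - f3 * g1) - f4 * g0)
    (hu4 : 7 * x * u4 = f0 * g5 + 3 * (f1 * g4 - f4 * g1) + 2 * (f2 * g3 - f3 * g2) - f5 * g0)
    (hv0 : 1470 * x ^ 3 * v0 = 7 * (f0 * g3 - f3 * g0) - 15 * (f1 * g2 - f2 * g1))
    (hv1 : 1470 * x ^ 3 * v1 = 7 * (f0 * g4 - f4 * g0) - 8 * (f1 * g3 - f3 * g1))
    (hv2 : 1470 * x ^ 3 * v2 =
      7 * (f0 * g5 - f5 * g0) - (f1 * g4 - f4 * g1) - 8 * (f2 * g3 - f3 * g2))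
    (hw : 17640 * x ^ 5 * w =
      7 * (f0 * g5 - f5 * g0) - 15 * (f1 * g4 - f4 * g1) + 20 * (f2 * g3 - f3 * g2))
    (hs : 130680 * x ^ 4 * s = 22 * (u0 * u4) - 66 * (u1 * u3) + 45 * u2 ^ 2)
    (ht : 3696 * x ^ 2 * t = 66 * (u0 * v2) - 77 * (u1 * v1) + 28 * (u2 * v0)) :
    u0 * w = -(21 / 2) * s + 84 / 11 * t + 735 / 484 * v0 ^ 2 := by
  have solve : ∀ a b c : L, a ≠ 0 → a * b = c → b = c / a := fun a b c ha h =>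
    (eq_div_iff ha).mpr (by rw [mul_comm, h])
  replace hu0 := solve _ _ _ (by simp [hx]) hu0
  replace hu1 := solve _ _ _ (by simp [hx]) hu1
  replace hu2 := solve _ _ _ (by simp [hx]) hu2
  replace hu3 := solve _ _ _ (by simp [hx]) hu3
  replace hu4 := solve _ _ _ (by simp [hx]) hu4
  replace hv0 := solve _ _ _ (by simp [hx]) hv0
  replace hv1 := solve _ _ _ (by simp [hx]) hv1
  replace hv2 := solve _ _ _ (by simp [hx]) hv2
  replace hw := solve _ _ _ (by simp [hx]) hw
  replace hs := solve _ _ _ (by simp [hx]) hs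
  replace ht := solve _ _ _ (by simp [hx]) ht
  subst hu0 hu1 hu2 hu3 hu4 hv0 hv1 hv2 hw hs ht
  field_simp
  ring

end Syzygy

/-- For binary forms `A, B` of order `7`, writing `𝒞_q = (A,B)_q`, one has
`𝒞₁·𝒞₅ = −(21/2)·(𝒞₁,𝒞₁)₄ + (84/11)·(𝒞₁,𝒞₃)₂ + (735/484)·𝒞₃²`. -/
theorem syzygy_d7_r3 {k : Type*} [Field k] [CharZero k] (d : ℕ) (hd : 7 ≤ d)
    (A B : MvPolynomial (Fin 2) k)
    (hA : A.IsHomogeneous 7) (hB : B.IsHomogeneous 7) :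
    transvectant 7 7 1 A B * transvectant 7 7 5 A B =
      C (-(21 / 2 : k)) *
          transvectant 12 12 4 (transvectant 7 7 1 A B) (transvectant 7 7 1 A B)
        + C ((84 / 11 : k)) *
            transvectant 12 8 2 (transvectant 7 7 1 A B) (transvectant 7 7 3 A B)
        + C ((735 / 484 : k)) * (transvectant 7 7 3 A B) ^ 2 := by
  have hU : (transvectant 7 7 1 A B).IsHomogeneous 12 := isHomogeneous_transvectant hA hB
  have hV : (transvectant 7 7 3 A B).IsHomogeneous 8 := isHomogeneous_transvectant hA hB
  have hu0 := transvectant_one hA hB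
  have hv0 := transvectant_three hA hB
  have hw := transvectant_five hA hB
  have hs := transvectant_four hU
  have ht := transvectant_two hU hV
  generalize transvectant 7 7 1 A B = U at *
  generalize transvectant 7 7 3 A B = V at *
  generalize transvectant 7 7 5 A B = W at *
  generalize transvectant 12 12 4 U U = S at *
  generalize transvectant 12 8 2 U V = T at *
  have hU0 : U = jet U 0 0 := by simp [jet]
  have hV0 : V = jet V 0 0 := by simp [jet]
  rw [hU0] at hu0 ⊢
  rw [hV0] at hv0 ⊢
  -- `x₁` and numerals are constants for `∂/∂x₂`
  have hX : pderiv (1 : Fin 2) (X 0 : MvPolynomial (Fin 2) k) = 0 := by simp [pderiv_X]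
  have key : ∀ (N e : ℕ) (P Q : MvPolynomial (Fin 2) k),
      (N : MvPolynomial (Fin 2) k) * X 0 ^ e * P = Q →
      (N : MvPolynomial (Fin 2) k) * X 0 ^ e * pderiv 1 P = pderiv 1 Q := by
    rintro N e P Q rfl
    simp [hX]
  have hn : ∀ N : ℕ, pderiv (1 : Fin 2) (N : MvPolynomial (Fin 2) k) = 0 := fun N => by simp
  have d1 := key 7 1 _ _ (by simpa using hu0)
  have d2 := key 7 1 _ _ d1
  have d3 := key 7 1 _ _ d2
  have d4 := key 7 1 _ _ d3
  have e1 := key 1470 3 _ _ (by simpa using hv0)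
  have e2 := key 1470 3 _ _ e1
  have h7 := hn 7
  have h15 := hn 15
  push_cast at h7 h15 d1 d2 d3 d4 e1 e2
  simp only [pow_one, map_add, map_sub, pderiv_mul, pderiv_one_jet, h7, h15,
    map_zero, Nat.reduceAdd] at d1 d2 d3 d4 e1 e2
  -- the field of fractions allows division by `x₁` and by the numerical denominators
  let φ : MvPolynomial (Fin 2) k →+* FractionRing (MvPolynomial (Fin 2) k) := algebraMap _ _
  have hφ : Function.Injective φ := IsFractionRing.injective _ _
  have : CharZero (FractionRing (MvPolynomial (Fin 2) k)) := charZero_of_injective_ringHom hφ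
  have hx : φ (X 0) ≠ 0 := by
    rw [Ne, map_eq_zero_iff φ hφ]
    exact X_ne_zero _
  apply hφ
  have hC : ∀ c : ℚ, φ (C (c : k)) = (c : FractionRing (MvPolynomial (Fin 2) k)) :=
    fun c => map_ratCast (φ.comp C) c
  have c1 := hC (-(21 / 2))
  have c2 := hC (84 / 11)
  have c3 := hC (735 / 484)
  push_cast at c1 c2 c3
  simp only [map_add, map_mul, map_pow, c1, c2, c3]
  replace hu0 := congrArg φ hu0
  replace hv0 := congrArg φ hv0
  replace hw := congrArg φ hw
  replace hs := congrArg φ hs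
  replace ht := congrArg φ ht
  replace d1 := congrArg φ d1
  replace d2 := congrArg φ d2
  replace d3 := congrArg φ d3
  replace d4 := congrArg φ d4
  replace e1 := congrArg φ e1
  replace e2 := congrArg φ e2
  simp only [map_add, map_sub, map_mul, map_pow, map_ofNat, map_zero]
    at hu0 hv0 hw hs ht d1 d2 d3 d4 e1 e2
  refine jet_identity _ _ _ _ _ _ _ _ _ _ _ _ _ _ _ _ _ _ _ _ _ _ _ _ hx hu0 ?_ ?_ ?_ ?_
    hv0 ?_ ?_ hw hs ht
  · linear_combination d1
  · linear_combination d2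
  · linear_combination d3
  · linear_combination d4
  · linear_combination e1
  · linear_combination e2
end

section
/- Main Theorem (explicit quadratic syzygy of weight 2r). Let d, r be integers with 3 ≤ r ≤ (d+1)/2. For each pair (i,j) with 1 ≤ i, j ≤ r and i+j ≤ r+1 define N₁(i,j) = (2di + 2dj − dr − 2i² − 2j² − 2d + 3i + 3j − 2) · d!·(d−1)!·(2r−1)!·(2d−4i+3)!·(2d−4j+3)!, N₂(i,j) = (2i−1)!·(2j−1)!·(d−2i+1)!·(d−2j+1)!·(2d−2i+2)!·(2d−2j+2)!·(2r−2i−2j+2)!, θ_{i,j} = δ_{i,1}δ_{j,r} + δ_{i,r}δ_{j,1} − 8·N₁(i,j)/N₂(i,j) (where δ is the Kronecker delta), and α_{i,j} = ε_{i,j}·θ_{i,j} where ε_{i,j} = 2 if i ≠ j and 1 if i = j. Then for all binary forms A, B of order d over a field of characteristic zero, writing 𝒞_{2i−1} = (A,B)_{2i−1}, one has Σ α_{i,j} · (𝒞_{2i−1}, 𝒞_{2j−1})_{2(r−i−j+1)} = 0, where the sum ranges over all pairs (i,j) with 1 ≤ i ≤ j ≤ r and i+j ≤ r+1. -/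
/-!
Write `C_q = (A, B)_q`. The syzygy is an expansion of the product `C₁ C_{2r-1}`.

For forms `A, B, C, D` of order `d`, the product `(A, C)₁ (B, D)_N` is a linear combination of the
covariants `((A, B)_p, (C, D)_q)_{N+1-p-q}` (`U_one_mul_U`). Indeed
`(A, C)₁ = ∂₁A ∂₂C - ∂₂A ∂₁C` up to a scalar, and Gordan's series
`F · (B, G)_n = ∑ κ_p ((F, B)_p, G)_{n-p}` (`mul_U`), applied once with `F` a derivative of `A` and
once with `F` a derivative of `C`, expands each of `∂A · ∂C · (B, D)_N` (`mul_mul_U`). The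
forms `(∂A, B)_p` are then rewritten through derivatives of `(A, B)_p` and multiples of
`(A, B)_{p+1}` by a variable, and likewise the `(∂C, D)_q` (`U_one_term`).

Setting `{C, D} = {A, B}` and antisymmetrising, that is, evaluating
`(A, A)₁(B, B)_N - (A, B)₁(B, A)_N - (B, A)₁(A, B)_N + (B, B)₁(A, A)_N` with `N = 2r - 1`, kills
all terms with `p` or `q` even and leaves `2 C₁ C_N` on the left (`U_one_mul_U_self`). So
`C₁ C_{2r-1}` is a combination of the `(C_{2i-1}, C_{2j-1})_{2(r+1-i-j)}`, and each coefficient, a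
sum of four products of factorials, collapses to `4 N₁/N₂` (`coef_eq`, `coef_eq_N1_div_N2`). The
Kronecker deltas in `θ` contribute `2 C₁ C_{2r-1}`, which the terms `-8 N₁/N₂` cancel.
-/

open MvPolynomial Finset

/-- `N₁(i,j) = (2di+2dj−dr−2i²−2j²−2d+3i+3j−2)·d!·(d−1)!·(2r−1)!·(2d−4i+3)!·(2d−4j+3)!`. -/
noncomputable def N1 (d r i j : ℕ) : ℚ :=
  (2 * (d : ℚ) * i + 2 * d * j - d * r - 2 * i ^ 2 - 2 * j ^ 2 - 2 * d + 3 * i + 3 * j - 2) *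
    ((d.factorial * (d - 1).factorial * (2 * r - 1).factorial *
      (2 * d + 3 - 4 * i).factorial * (2 * d + 3 - 4 * j).factorial : ℕ) : ℚ)

/-- `N₂(i,j) = (2i−1)!·(2j−1)!·(d−2i+1)!·(d−2j+1)!·(2d−2i+2)!·(2d−2j+2)!·(2r−2i−2j+2)!`. -/
noncomputable def N2 (d r i j : ℕ) : ℚ :=
  (((2 * i - 1).factorial * (2 * j - 1).factorial *
    (d + 1 - 2 * i).factorial * (d + 1 - 2 * j).factorial *
    (2 * d + 2 - 2 * i).factorial * (2 * d + 2 - 2 * j).factorial *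
    (2 * r + 2 - 2 * i - 2 * j).factorial : ℕ) : ℚ)

/-- `θ_{i,j} = δ_{i,1}δ_{j,r} + δ_{i,r}δ_{j,1} − 8·N₁(i,j)/N₂(i,j)`. -/
noncomputable def theta (d r i j : ℕ) : ℚ :=
  (if i = 1 then 1 else 0) * (if j = r then 1 else 0)
    + (if i = r then 1 else 0) * (if j = 1 then 1 else 0)
    - 8 * N1 d r i j / N2 d r i j

/-- `α_{i,j} = ε_{i,j}·θ_{i,j}` with `ε_{i,j} = 2` if `i ≠ j` and `1` if `i = j`. -/
noncomputable def alpha (d r i j : ℕ) : ℚ :=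
  (if i = j then 1 else 2) * theta d r i j

namespace QuadraticSyzygy

variable {k : Type*} [Field k]

/-! ### Unnormalised transvectants -/

/-- The partial derivative `∂/∂x₁`, as a linear map. -/
noncomputable abbrev D0 : MvPolynomial (Fin 2) k →ₗ[k] MvPolynomial (Fin 2) k :=
  (pderiv (0 : Fin 2) : Derivation k _ _).toLinearMap

/-- The partial derivative `∂/∂x₂`, as a linear map. -/
noncomputable abbrev D1 : MvPolynomial (Fin 2) k →ₗ[k] MvPolynomial (Fin 2) k :=
  (pderiv (1 : Fin 2) : Derivation k _ _).toLinearMap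

/-- The unnormalised transvectant: Cayley's operator `∂x₁∂y₂ − ∂x₂∂y₁` applied `q` times to
`F(x)G(y)`, followed by `y = x`. -/
noncomputable def U :
    ℕ → MvPolynomial (Fin 2) k →ₗ[k] MvPolynomial (Fin 2) k →ₗ[k] MvPolynomial (Fin 2) k
  | 0 => LinearMap.mul k _
  | q + 1 => (U q).compl₁₂ D0 D1 - (U q).compl₁₂ D1 D0

lemma U_zero (F G : MvPolynomial (Fin 2) k) : U 0 F G = F * G := rfl

lemma U_succ (q : ℕ) (F G : MvPolynomial (Fin 2) k) :
    U (q + 1) F G = U q (D0 F) (D1 G) - U q (D1 F) (D0 G) := rfl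

lemma D_comm (F : MvPolynomial (Fin 2) k) : D1 (D0 F) = D0 (D1 F) := by
  have h : ⁅(pderiv 1 : Derivation k (MvPolynomial (Fin 2) k) (MvPolynomial (Fin 2) k)),
      (pderiv 0 : Derivation k (MvPolynomial (Fin 2) k) (MvPolynomial (Fin 2) k))⁆ = 0 := by
    apply MvPolynomial.derivation_ext
    intro i
    fin_cases i <;> simp [Derivation.commutator_apply, pderiv_X]
  have := congrArg (fun D => D F) h
  simpa [Derivation.commutator_apply, sub_eq_zero] using this

lemma D0_X0 (F : MvPolynomial (Fin 2) k) : D0 (X 0 * F) = F + X 0 * D0 F := by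
  simp [pderiv_X, add_comm]
lemma D0_X1 (F : MvPolynomial (Fin 2) k) : D0 (X 1 * F) = X 1 * D0 F := by
  simp [pderiv_X]
lemma D1_X0 (F : MvPolynomial (Fin 2) k) : D1 (X 0 * F) = X 0 * D1 F := by
  simp [pderiv_X]
lemma D1_X1 (F : MvPolynomial (Fin 2) k) : D1 (X 1 * F) = F + X 1 * D1 F := by
  simp [pderiv_X, add_comm]

lemma D0_mul (F G : MvPolynomial (Fin 2) k) : D0 (F * G) = D0 F * G + F * D0 G := by
  simp [mul_comm, add_comm]
lemma D1_mul (F G : MvPolynomial (Fin 2) k) : D1 (F * G) = D1 F * G + F * D1 G := by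
  simp [mul_comm, add_comm]

lemma D0_U (q : ℕ) (F G : MvPolynomial (Fin 2) k) :
    D0 (U q F G) = U q (D0 F) G + U q F (D0 G) := by
  induction q generalizing F G with
  | zero => simp only [U_zero, D0_mul]
  | succ q ih => simp only [U_succ, map_sub, ih, D_comm]; abel

lemma D1_U (q : ℕ) (F G : MvPolynomial (Fin 2) k) :
    D1 (U q F G) = U q (D1 F) G + U q F (D1 G) := by
  induction q generalizing F G with
  | zero => simp only [U_zero, D1_mul]
  | succ q ih => simp only [U_succ, map_sub, ih, D_comm]; abel

lemma U_swap (q : ℕ) (F G : MvPolynomial (Fin 2) k) : U q G F = (-1 : k) ^ q • U q F G := by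
  induction q generalizing F G with
  | zero => simp [U_zero, mul_comm]
  | succ q ih =>
    rw [U_succ, U_succ, ih (D1 F), ih (D0 F), pow_succ]
    module

/-- Euler's equation of degree `m`. Working with it rather than with `IsHomogeneous` lets the
degree be any scalar, so that degrees can be subtracted freely. -/
def Eul (m : k) (F : MvPolynomial (Fin 2) k) : Prop :=
  X 0 * D0 F + X 1 * D1 F = m • F

lemma Eul.of_isHomogeneous {n : ℕ} {F : MvPolynomial (Fin 2) k} (h : F.IsHomogeneous n) :
    Eul (n : k) F := by
  have := h.sum_X_mul_pderiv
  rw [Fin.sum_univ_two] at this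
  rw [Eul]
  simpa [Nat.cast_smul_eq_nsmul] using this

lemma Eul.D0 {m : k} {F : MvPolynomial (Fin 2) k} (h : Eul m F) : Eul (m - 1) (D0 F) := by
  have := congrArg QuadraticSyzygy.D0 h
  rw [map_add, D0_X0, D0_X1, map_smul] at this
  rw [Eul, D_comm]
  linear_combination (norm := module) this

lemma Eul.D1 {m : k} {F : MvPolynomial (Fin 2) k} (h : Eul m F) : Eul (m - 1) (D1 F) := by
  have := congrArg QuadraticSyzygy.D1 h
  rw [map_add, D1_X0, D1_X1, map_smul, D_comm] at this
  rw [Eul]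
  linear_combination (norm := module) this

lemma Eul.U {m n : k} (q : ℕ) {F G : MvPolynomial (Fin 2) k} (hF : Eul m F) (hG : Eul n G) :
    Eul (m + n - 2 * q) (U q F G) := by
  induction q generalizing F G m n with
  | zero =>
    rw [Eul] at *
    rw [U_zero, D0_mul, D1_mul]
    simp only [smul_eq_C_mul] at *
    push_cast [map_add, map_sub, map_mul]
    simp
    linear_combination G * hF + F * hG
  | succ q ih =>
    have h1 := ih hF.D0 hG.D1
    have h2 := ih hF.D1 hG.D0
    rw [Eul] at *
    rw [U_succ, map_sub, map_sub, mul_sub, mul_sub]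
    push_cast
    linear_combination (norm := module) h1 - h2

/-- Euler's equation for `G`, with the factors `x₁`, `x₂` moved into the first argument of a
transvectant; differentiating them costs `q`. -/
lemma U_contract_right {g : k} (q : ℕ) (H : MvPolynomial (Fin 2) k) {G : MvPolynomial (Fin 2) k}
    (hG : Eul g G) :
    U q (X 0 * H) (D0 G) + U q (X 1 * H) (D1 G) = (g - q) • U q H G := by
  induction q generalizing H G g with
  | zero =>
    rw [Eul] at hG
    simp only [U_zero, smul_eq_C_mul] at *
    simp
    linear_combination H * hG
  | succ q ih =>
    have h1 := ih (D0 H) hG.D1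
    have h2 := ih (D1 H) hG.D0
    simp only [U_succ, D0_X0, D0_X1, D1_X0, D1_X1, map_add, LinearMap.add_apply, D_comm] at *
    push_cast
    linear_combination (norm := module) h1 - h2

lemma U_contract_left {f : k} (q : ℕ) {F : MvPolynomial (Fin 2) k} (K : MvPolynomial (Fin 2) k)
    (hF : Eul f F) :
    U q (D0 F) (X 0 * K) + U q (D1 F) (X 1 * K) = (f - q) • U q F K := by
  rw [U_swap q (X 0 * K), U_swap q (X 1 * K), ← smul_add, U_contract_right q K hF, U_swap q K F]
  module

/-- Cayley's operator lowers the bracket `x₁y₂ − x₂y₁`. -/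
lemma U_bracket {h l : k} (q : ℕ) {H K : MvPolynomial (Fin 2) k} (hH : Eul h H) (hK : Eul l K) :
    U q (X 0 * H) (X 1 * K) - U q (X 1 * H) (X 0 * K)
      = ((q : k) * (h + l + 3 - q)) • U (q - 1) H K := by
  induction q generalizing H K h l with
  | zero => simp [U_zero]; ring
  | succ q ih =>
    have h1 := ih hH.D0 hK.D1
    have h2 := ih hH.D1 hK.D0
    have h3 := U_contract_right q H hK
    have h4 := U_contract_left q K hH
    have h5 : ((q : k) * (h + l + 1 - q)) • (U (q - 1) (D0 H) (D1 K) - U (q - 1) (D1 H) (D0 K))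
        = ((q : k) * (h + l + 1 - q)) • U q H K := by
      cases q with
      | zero => simp
      | succ q => rw [Nat.add_sub_cancel, ← U_succ]
    have e1 : U q H (X 0 * D0 K) + U q H (X 1 * D1 K) = l • U q H K := by
      rw [← map_add, hK, map_smul]
    have e2 : U q (X 0 * D0 H) K + U q (X 1 * D1 H) K = h • U q H K := by
      rw [← LinearMap.add_apply, ← map_add, hH, map_smul, LinearMap.smul_apply]
    simp only [U_succ, D0_X0, D0_X1, D1_X0, D1_X1, map_add, LinearMap.add_apply,
      Nat.add_sub_cancel] at *
    push_cast
    linear_combination (norm := module) h1 - h2 + h5 + e1 + e2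

lemma U_D0_aux {a b : k} (p : ℕ) {A B : MvPolynomial (Fin 2) k} (hA : Eul a A) (hB : Eul b B) :
    (b - p) • U p (D0 A) B - (a - p) • U p A (D0 B) = X 1 * U (p + 1) A B := by
  induction p generalizing A B a b with
  | zero =>
    rw [Eul] at *
    simp only [U_succ, U_zero, smul_eq_C_mul] at *
    simp at *
    linear_combination (pderiv 0 B) * hA - (pderiv 0 A) * hB
  | succ p ih =>
    have h1 := ih hA.D0 hB.D1
    have h2 := ih hA.D1 hB.D0
    rw [U_succ (p + 1), mul_sub, ← h1, ← h2]
    simp only [U_succ, D_comm]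
    push_cast
    module

lemma U_D1_aux {a b : k} (p : ℕ) {A B : MvPolynomial (Fin 2) k} (hA : Eul a A) (hB : Eul b B) :
    (b - p) • U p (D1 A) B - (a - p) • U p A (D1 B) = - (X 0 * U (p + 1) A B) := by
  induction p generalizing A B a b with
  | zero =>
    rw [Eul] at *
    simp only [U_succ, U_zero, smul_eq_C_mul] at *
    simp at *
    linear_combination (pderiv 1 B) * hA - (pderiv 1 A) * hB
  | succ p ih =>
    have h1 := ih hA.D0 hB.D1
    have h2 := ih hA.D1 hB.D0
    rw [U_succ (p + 1), mul_sub]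
    simp only [U_succ, D_comm] at *
    push_cast
    linear_combination (norm := module) h1 - h2

/-- A derivative of the first argument, in terms of a derivative of the transvectant and of the
next transvectant. -/
lemma U_D0_left {a b : k} (p : ℕ) {A B : MvPolynomial (Fin 2) k} (hA : Eul a A) (hB : Eul b B) :
    (a + b - 2 * p) • U p (D0 A) B
    = (a - p) • D0 (U p A B) + X 1 * U (p + 1) A B := by
  rw [← U_D0_aux p hA hB, D0_U]; module

lemma U_D1_left {a b : k} (p : ℕ) {A B : MvPolynomial (Fin 2) k} (hA : Eul a A) (hB : Eul b B) :
    (a + b - 2 * p) • U p (D1 A) B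
    = (a - p) • D1 (U p A B) - X 0 * U (p + 1) A B := by
  rw [D1_U]; linear_combination (norm := module) U_D1_aux p hA hB

lemma U_D0_right {a b : k} (p : ℕ) {A B : MvPolynomial (Fin 2) k} (hA : Eul a A) (hB : Eul b B) :
    (a + b - 2 * p) • U p A (D0 B)
    = (b - p) • D0 (U p A B) - X 1 * U (p + 1) A B := by
  rw [← U_D0_aux p hA hB, D0_U]; module

lemma U_D1_right {a b : k} (p : ℕ) {A B : MvPolynomial (Fin 2) k} (hA : Eul a A) (hB : Eul b B) :
    (a + b - 2 * p) • U p A (D1 B)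
    = (b - p) • D1 (U p A B) + X 0 * U (p + 1) A B := by
  rw [← neg_neg (X 0 * _), ← U_D1_aux p hA hB, D1_U]; module

/-- Transvectants of index above the order vanish. -/
lemma U_eq_zero {a p : ℕ} (h : a < p) {A : MvPolynomial (Fin 2) k} (hA : A.IsHomogeneous a)
    (B : MvPolynomial (Fin 2) k) : U p A B = 0 := by
  induction p generalizing a A B with
  | zero => omega
  | succ p ih =>
    rw [U_succ]
    rcases Nat.eq_zero_or_pos a with rfl | ha
    · rw [← totalDegree_zero_iff_isHomogeneous, totalDegree_eq_zero_iff_eq_C] at hA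
      rw [hA]
      simp
    · have h0 : (D0 A).IsHomogeneous (a - 1) := hA.pderiv
      have h1 : (D1 A).IsHomogeneous (a - 1) := hA.pderiv
      rw [ih (by omega) h0, ih (by omega) h1, sub_zero]

/-- The term of index `(p, q)` in the expansion of `(A, C)₁ (B, D)_N`, with `m = N - p - q`:
after trading the inner derivatives, what remains are contractions and one bracket. -/
lemma U_one_term {d : k} (p q m : ℕ) {A B C D : MvPolynomial (Fin 2) k}
    (hA : Eul d A) (hB : Eul d B) (hC : Eul d C) (hD : Eul d D) :
    ((2 * d - 2 * p) * (2 * d - 2 * q)) •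
      (U m (U p (D0 A) B) (U q (D1 C) D) - U m (U p (D1 A) B) (U q (D0 C) D))
      = ((d - p) * (d - q)) • U (m + 1) (U p A B) (U q C D)
        - ((d - p) * (2 * d - 2 * p - m)) • U m (U p A B) (U (q + 1) C D)
        + ((d - q) * (2 * d - 2 * q - m)) • U m (U (p + 1) A B) (U q C D)
        + ((m : k) * (4 * d - 2 * p - 2 * q - 1 - m)) •
          U (m - 1) (U (p + 1) A B) (U (q + 1) C D) := by
  have a0 := U_D0_left p hA hB
  have a1 := U_D1_left p hA hB
  have b0 := U_D0_left q hC hD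
  have b1 := U_D1_left q hC hD
  have t1 := congrArg₂ (fun P Q => U m P Q) a0 b1
  have t2 := congrArg₂ (fun P Q => U m P Q) a1 b0
  have r1 := U_contract_left m (U (q + 1) C D) (hA.U p hB)
  have r2 := U_contract_right m (U (p + 1) A B) (hC.U q hD)
  have r3 := U_bracket m (hA.U (p + 1) hB) (hC.U (q + 1) hD)
  simp only [map_add, map_sub, map_smul, LinearMap.add_apply, LinearMap.sub_apply,
        LinearMap.smul_apply] at t1 t2
  rw [U_succ m]
  push_cast at *
  linear_combination (norm := module) t1 - t2 - (d - p) • r1 + (d - q) • r2 + r3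

/-! ### Gordan's series -/

section

variable [CharZero k]

/-- Coefficient of the expansion `mul_U`, without its factor `a + β + n + 1 - 2p`. -/
noncomputable def kap (k : Type*) [Field k] (a β γ n p : ℕ) : k :=
  (-1) ^ p * n.choose p * ((γ + p).factorial / γ.factorial) *
    ((β + n - p).factorial / β.factorial) *
    ((a + β - p).factorial / (a + β + n + 1 - p).factorial)

lemma kap_zero (a β γ n : ℕ) :
    (β + n + 1 : k) * kap k a β γ n 0 = (a + β + n + 2) * kap k a β γ (n + 1) 0 := by
  have h1 := Nat.factorial_succ (β + n)
  have h2 := Nat.factorial_succ (a + β + n + 1)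
  simp only [kap, Nat.sub_zero, ← add_assoc, h1, h2]
  have hc : ((a : k) + β + n + 1 + 1) ≠ 0 := by exact_mod_cast Nat.succ_ne_zero (a + β + n + 1)
  push_cast
  simp
  have := fun n : ℕ => (Nat.cast_ne_zero (R := k)).2 n.factorial_ne_zero
  field_simp [this]
  ring

/-- The recursion that drives the induction in `mul_U`. -/
lemma kap_succ (a β γ n p : ℕ) (hp : p ≤ n) (hpa : p + 1 ≤ a) :
    ((β : k) + n - p) * kap k a β γ n (p + 1) - (γ + p + 1) * kap k a β γ n p
      = (a + β + n - 2 * p) * kap k a β γ (n + 1) (p + 1) := by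
  obtain ⟨e, rfl⟩ := Nat.exists_eq_add_of_le hp
  obtain ⟨f, rfl⟩ := Nat.exists_eq_add_of_le hpa
  have hfac := fun n : ℕ => (Nat.cast_ne_zero (R := k)).2 n.factorial_ne_zero
  have hpas : ((p + e + 1).choose (p + 1) : k) = (p + e).choose p + (p + e).choose (p + 1) := by
    exact_mod_cast Nat.choose_succ_succ (p + e) p
  have hrec : ((p + e).choose (p + 1) : k) * (p + 1) = (p + e).choose p * e := by
    have := Nat.choose_succ_right_eq (p + e) p
    rw [Nat.add_sub_cancel_left] at this
    exact_mod_cast this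
  have g1 : (((γ + (p + 1)).factorial : ℕ) : k) = (γ + p + 1) * ((γ + p).factorial : k) := by
    rw [← add_assoc, Nat.factorial_succ]; push_cast; ring
  have g2 : (((p + 1 + f + β - p).factorial : ℕ) : k) = (f + β + 1) * ((f + β).factorial : k) := by
    rw [show p + 1 + f + β - p = (f + β) + 1 by omega, Nat.factorial_succ]; push_cast; ring
  have g3 : (((f + β + p + e + 2).factorial : ℕ) : k)
      = (f + β + p + e + 2) * ((f + β + p + e + 1).factorial : k) := by
    rw [Nat.factorial_succ]; push_cast; ring
  have hne : (f + β + p + e + 2 : k) ≠ 0 := by exact_mod_cast Nat.succ_ne_zero (f + β + p + e + 1)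
  have g4 : ((p + e).choose (p + 1) : k) * ((β + e : k) * (β + (p + e) - (p + 1)).factorial)
      = (p + e).choose (p + 1) * ((β + e).factorial : k) := by
    cases e with
    | zero => simp
    | succ e =>
      rw [show β + (p + (e + 1)) - (p + 1) = β + e by omega, ← add_assoc β, Nat.factorial_succ]
      push_cast; ring
  simp only [kap]
  rw [hpas, g1, g2, show p + 1 + f + β - (p + 1) = f + β by omega,
    show p + 1 + f + β + (p + e) + 1 - (p + 1) = f + β + p + e + 1 by omega,
    show p + 1 + f + β + (p + e) + 1 - p = f + β + p + e + 2 by omega,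
    show p + 1 + f + β + (p + e + 1) + 1 - (p + 1) = f + β + p + e + 2 by omega,
    show β + (p + e) - p = β + e by omega, show β + (p + e + 1) - (p + 1) = β + e by omega, g3,
    pow_succ]
  have h1 := hfac γ
  have h2 := hfac β
  have h3 := hfac (f + β + p + e + 1)
  push_cast
  field_simp
  linear_combination ((γ + p + 1 : k) * (γ + p).factorial * (f + β).factorial) *
    (-(f + β + p + e + 2 : k) * g4 - ((β + e).factorial : k) * hrec)

lemma sum_range_shift {M : Type*} [AddCommGroup M] (n : ℕ) (f g h : ℕ → M) (h0 : h 0 = f 0)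
    (hs : ∀ p ≤ n, h (p + 1) = f (p + 1) - g p) (hf : f (n + 1) = 0) :
    ∑ p ∈ range (n + 2), h p = ∑ p ∈ range (n + 1), (f p - g p) := by
  rw [sum_sub_distrib, Finset.sum_range_succ', h0,
    Finset.sum_congr rfl (fun p hp => hs p (by simpa [Nat.lt_succ_iff] using hp)),
    sum_sub_distrib, ← add_zero (∑ p ∈ range (n + 1), f p), ← hf, ← Finset.sum_range_succ f,
    Finset.sum_range_succ' f]
  abel

/-- Gordan's series for `A · (B, G)_n`, where `B` and `G` have orders `β + n` and `γ + n`. The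
induction on `n` peels one Cayley operator off `(B, G)_{n+1}`. -/
lemma mul_U {a : ℕ} (β γ n : ℕ) (hn : n ≤ a + 1) {A B G : MvPolynomial (Fin 2) k}
    (hA : A.IsHomogeneous a) (hB : Eul ((β : k) + n) B) (hG : Eul ((γ : k) + n) G) :
    A * U n B G = ∑ p ∈ range (n + 1),
      ((a + β + n + 1 - 2 * p) * kap k a β γ n p : k) • U (n - p) (U p A B) G := by
  induction n generalizing B G with
  | zero =>
    have : (a + β + 1 : k) ≠ 0 := by exact_mod_cast Nat.succ_ne_zero (a + β)
    have hfac := fun n : ℕ => (Nat.cast_ne_zero (R := k)).2 n.factorial_ne_zero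
    have h : (a + β + 1 : k) * kap k a β γ 0 0 = 1 := by
      simp only [kap, Nat.sub_zero, add_zero, Nat.factorial_succ]
      have h1 := hfac β
      have h2 := hfac γ
      have h3 := hfac (a + β)
      push_cast
      simp
      field_simp
    simp [U_zero, h, mul_assoc]
  | succ n ih =>
    have hA' := Eul.of_isHomogeneous (k := k) hA
    have e : ∀ x : k, x + (n + 1 : ℕ) - 1 = x + n := by intro x; push_cast; ring
    have i1 := ih (by omega) (e β ▸ hB.D0) (e γ ▸ hG.D1)
    have i2 := ih (by omega) (e β ▸ hB.D1) (e γ ▸ hG.D0)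
    rw [U_succ, mul_sub, i1, i2, ← sum_sub_distrib]
    symm
    rw [sum_range_shift n (fun p => ((β + n + 1 - p : k) * kap k a β γ n p) •
        U (n + 1 - p) (U p A B) G) (fun p => ((γ + p + 1 : k) * kap k a β γ n p) •
        U (n - p) (U (p + 1) A B) G)]
    · refine Finset.sum_congr rfl fun p hp => ?_
      have hp : p ≤ n := by simpa [Nat.lt_succ_iff] using hp
      have r0 := U_D0_right p hA' hB
      have r1 := U_D1_right p hA' hB
      have r0' := congrArg (fun P => U (n - p) P (D1 G)) r0
      have r1' := congrArg (fun P => U (n - p) P (D0 G)) r1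
      have c := U_contract_right (n - p) (U (p + 1) A B) hG
      simp only [map_add, map_sub, map_smul, LinearMap.add_apply, LinearMap.sub_apply,
        LinearMap.smul_apply] at r0' r1'
      rw [show n + 1 - p = (n - p) + 1 by omega, U_succ]
      push_cast [Nat.cast_sub hp] at *
      linear_combination (norm := module) (kap k a β γ n p) • (r1' - r0' + c)
    · have := kap_zero (k := k) a β γ n
      push_cast at *
      simp only [sub_zero, mul_zero, this]
      congr 2
      ring
    · intro p hp
      rcases Nat.lt_or_ge a (p + 1) with h | h
      · simp [U_eq_zero h hA]
      · have := kap_succ (k := k) a β γ n p hp h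
        rw [show n + 1 - (p + 1) = n - p by omega, ← sub_smul]
        congr 1
        push_cast
        linear_combination -this
    · simp [kap]

/-! ### Expansion of `(A, C)₁ (B, D)_N` -/

/-- Coefficient of the expansion `mul_mul_U` of `A · C · (B, D)_N`, where `A`, `C` have order
`d - 1` and `B`, `D` have order `d`, without its factor
`(2d - 2p)(2d - 2q)`; it vanishes outside `p + q ≤ N`. -/
noncomputable def eps (k : Type*) [Field k] (d N p q : ℕ) : k :=
  if p + q ≤ N then
    (-1) ^ p * (N.factorial / (p.factorial * q.factorial * (N - p - q).factorial)) *
      (((d - p).factorial * (d - q).factorial) / (d - N).factorial ^ 2) *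
      (((2 * d - 1 + q - N - p).factorial * (2 * d - 1 + p - N - q).factorial) /
        ((2 * d - p).factorial * (2 * d - q).factorial))
  else 0

lemma kap_mul_kap (a N p q : ℕ) (hN : N ≤ a + 1) (hpq : p + q ≤ N) (hp : p ≤ a) :
    kap k a (a + 1 - N) (a + 1 - N) N p *
      ((-1) ^ (N - p) * kap k a (a + 1 - N + p) (2 * a + 1 - N - p) (N - p) q *
        (-1) ^ (N - p - q)) = eps k (a + 1) N p q := by
  have hfac := fun n : ℕ => (Nat.cast_ne_zero (R := k)).2 n.factorial_ne_zero
  have hsign : ((-1 : k) ^ (N - p)) * (-1) ^ q * (-1) ^ (N - p - q) = 1 := by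
    rw [← pow_add, ← pow_add]
    exact Even.neg_one_pow ⟨N - p, by omega⟩
  rw [eps, if_pos hpq, kap, kap, Nat.cast_choose k (show p ≤ N by omega),
    Nat.cast_choose k (show q ≤ N - p by omega),
    show a + 1 - N + N - p = a + 1 - p by omega,
    show a + (a + 1 - N) - p = 2 * a + 1 - N - p by omega,
    show a + (a + 1 - N) + N + 1 - p = 2 * (a + 1) - p by omega,
    show a + 1 - N + p + (N - p) - q = a + 1 - q by omega,
    show a + (a + 1 - N + p) - q = 2 * (a + 1) - 1 + p - N - q by omega,
    show a + (a + 1 - N + p) + (N - p) + 1 - q = 2 * (a + 1) - q by omega,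
    show 2 * a + 1 - N - p + q = 2 * (a + 1) - 1 + q - N - p by omega]
  have h1 := hfac (N - p)
  have h2 := hfac (a + 1 - N + p)
  have h3 := hfac (2 * a + 1 - N - p)
  have h4 := hfac (2 * (a + 1) - p)
  have h5 := hfac (2 * (a + 1) - q)
  have h6 := hfac (a + 1 - N)
  have h7 := hfac p
  have h8 := hfac q
  have h9 := hfac (N - p - q)
  field_simp
  linear_combination ((N.factorial : k) * (a + 1 - p).factorial * (a + 1 - q).factorial *
    (2 * (a + 1) - 1 + q - N - p).factorial * (2 * (a + 1) - 1 + p - N - q).factorial) * hsign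

/-- Gordan's series applied on both sides of `(B, D)_N`: `A` is absorbed by `B`, and then `C`
by `D`. -/
lemma mul_mul_U {a : ℕ} (N : ℕ) (hN : N ≤ a + 1) {A B C D : MvPolynomial (Fin 2) k}
    (hA : A.IsHomogeneous a) (hC : C.IsHomogeneous a)
    (hB : Eul ((a : k) + 1) B) (hD : Eul ((a : k) + 1) D) :
    A * C * U N B D = ∑ p ∈ range (N + 1), ∑ q ∈ range (N + 1),
      ((2 * (a + 1) - 2 * p) * (2 * (a + 1) - 2 * q) * eps k (a + 1) N p q : k) •
        U (N - p - q) (U p A B) (U q C D) := by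
  have hA' := Eul.of_isHomogeneous (k := k) hA
  have hc : ((a + 1 - N : ℕ) : k) = a + 1 - N := by push_cast [Nat.cast_sub hN]; ring
  rw [mul_comm A C, mul_assoc, mul_U (a + 1 - N) (a + 1 - N) N hN hA (by rwa [hc, sub_add_cancel])
    (by rwa [hc, sub_add_cancel]), Finset.mul_sum]
  refine Finset.sum_congr rfl fun p hp => ?_
  have hpN : p ≤ N := by simpa [Nat.lt_succ_iff] using hp
  rcases Nat.lt_or_ge a p with h | h
  · simp [U_eq_zero h hA]
  have hH := hA'.U p hB
  have c1 : ((a + 1 - N + p : ℕ) : k) + (N - p : ℕ) = a + 1 := by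
    rw [← Nat.cast_add, show a + 1 - N + p + (N - p) = a + 1 by omega]; push_cast; ring
  have c2 : ((2 * a + 1 - N - p : ℕ) : k) + (N - p : ℕ) = a + (a + 1) - 2 * p := by
    rw [← Nat.cast_add, eq_sub_iff_add_eq]
    norm_cast
    omega
  have key := mul_U (a + 1 - N + p) (2 * a + 1 - N - p) (N - p) (by omega) hC
    (B := D) (by rwa [c1]) (G := U p A B) (by rwa [c2])
  rw [mul_smul_comm, U_swap (N - p) D, mul_smul_comm, key, Finset.smul_sum, Finset.smul_sum]
  refine Eq.trans ?_ (Finset.sum_subset (s₁ := range (N - p + 1)) ?_ ?_)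
  · refine Finset.sum_congr rfl fun q hq => ?_
    have hqN : q ≤ N - p := by simpa [Nat.lt_succ_iff] using hq
    rw [U_swap (N - p - q) (U p A B), smul_smul, smul_smul, smul_smul,
      ← kap_mul_kap a N p q hN (by omega) h]
    congr 1
    rw [hc]
    have c3 : (a : k) + (a + 1 - N + p : ℕ) + (N - p : ℕ) = a + (a + 1) := by rw [add_assoc, c1]
    rw [c3]
    ring
  · intro q hq
    simp at *
    omega
  · intro q _ hq
    rw [eps, if_neg (by simp at hq; omega)]
    simp

/-- Expansion of `(A, C)₁ (B, D)_N` in the `((A, B)_p, (C, D)_q)_{N+1-p-q}`. The indices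
`N + 1 - (p + 1)` are written so as to show the four terms as values of one function at `(p, q)`,
`(p, q + 1)`, `(p + 1, q)` and `(p + 1, q + 1)`. -/
lemma U_one_mul_U {d : ℕ} (N : ℕ) (hd : 1 ≤ d) (hN : N ≤ d) {A B C D : MvPolynomial (Fin 2) k}
    (hA : A.IsHomogeneous d) (hB : B.IsHomogeneous d)
    (hC : C.IsHomogeneous d) (hD : D.IsHomogeneous d) :
    U 1 A C * U N B D = ∑ p ∈ range (N + 1), ∑ q ∈ range (N + 1), eps k d N p q •
      (((d - p : k) * (d - q)) • U (N + 1 - p - q) (U p A B) (U q C D)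
        - ((d - p : k) * (2 * d - 2 * p - (N - p - q))) •
          U (N + 1 - p - (q + 1)) (U p A B) (U (q + 1) C D)
        + ((d - q : k) * (2 * d - 2 * q - (N - p - q))) •
          U (N + 1 - (p + 1) - q) (U (p + 1) A B) (U q C D)
        + ((N - p - q : k) * (4 * d - 2 * p - 2 * q - 1 - (N - p - q))) •
          U (N + 1 - (p + 1) - (q + 1)) (U (p + 1) A B) (U (q + 1) C D)) := by
  obtain ⟨a, rfl⟩ := Nat.exists_eq_add_of_le' hd
  have eB := Eul.of_isHomogeneous (k := k) hB
  have eD := Eul.of_isHomogeneous (k := k) hD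
  have eA := Eul.of_isHomogeneous (k := k) hA
  have eC := Eul.of_isHomogeneous (k := k) hC
  have eB' := eB
  have eD' := eD
  push_cast at eB' eD'
  have hd0 : ∀ {F : MvPolynomial (Fin 2) k}, F.IsHomogeneous (a + 1) → (D0 F).IsHomogeneous a :=
    fun h => h.pderiv
  have hd1 : ∀ {F : MvPolynomial (Fin 2) k}, F.IsHomogeneous (a + 1) → (D1 F).IsHomogeneous a :=
    fun h => h.pderiv
  rw [U_succ, U_zero, U_zero, sub_mul, mul_mul_U N hN (hd0 hA) (hd1 hC) eB' eD',
    mul_mul_U N hN (hd1 hA) (hd0 hC) eB' eD', ← sum_sub_distrib]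
  refine Finset.sum_congr rfl fun p _ => ?_
  rw [← sum_sub_distrib]
  refine Finset.sum_congr rfl fun q _ => ?_
  by_cases h : p + q ≤ N
  · have key := U_one_term p q (N - p - q) eA eB eC eD
    rw [show N + 1 - p - q = N - p - q + 1 by omega, show N + 1 - p - (q + 1) = N - p - q by omega,
      show N + 1 - (p + 1) - q = N - p - q by omega,
      show N + 1 - (p + 1) - (q + 1) = N - p - q - 1 by omega]
    have hc : ((N - p - q : ℕ) : k) = N - p - q := by
      rw [Nat.cast_sub (by omega), Nat.cast_sub (by omega)]
    rw [hc] at key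
    rw [← key, ← smul_sub, smul_smul]
    push_cast
    congr 1
    ring
  · simp [eps, h]

/-! ### Antisymmetrisation -/

lemma sum_range_drop_zero {M : Type*} [AddCommMonoid M] (n : ℕ) (f : ℕ → M) (h : f 0 = 0) :
    ∑ p ∈ range (n + 1), f p = ∑ p ∈ range n, f (p + 1) := by
  rw [Finset.sum_range_succ', h, add_zero]

lemma sum_range_odd {M : Type*} [AddCommMonoid M] (r : ℕ) (f : ℕ → M)
    (h : ∀ n, f (2 * n) = 0) :
    ∑ p ∈ range (2 * r + 1), f p = ∑ i ∈ Icc 1 r, f (2 * i - 1) := by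
  induction r with
  | zero => simpa using h 0
  | succ r ih =>
    rw [Finset.sum_Icc_succ_top (by omega), ← ih, show 2 * (r + 1) + 1 = 2 * r + 1 + 1 + 1 by ring,
      Finset.sum_range_succ, Finset.sum_range_succ _ (2 * r + 1),
      show 2 * r + 1 + 1 = 2 * (r + 1) by ring, h, add_zero]
    congr 2

/-- Half the coefficient of `((A, B)_p, (A, B)_q)_{N + 1 - p - q}` in the expansion
`U_one_mul_U_self` of `(A, B)₁ (A, B)_N`, for odd `p`, `q`. -/
noncomputable def coef (k : Type*) [Field k] (d N p q : ℕ) : k :=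
  (d - p) * (d - q) * eps k d N p q
    - (d - p) * (2 * d - 2 * p - (N + 1 - p - q)) * eps k d N p (q - 1)
    + (d - q) * (2 * d - 2 * q - (N + 1 - p - q)) * eps k d N (p - 1) q
    + (N + 2 - p - q) * (4 * d - 2 * p - 2 * q + 2 - (N + 1 - p - q)) * eps k d N (p - 1) (q - 1)

/-- Collects the four terms of `U_one_mul_U` by the value `W p q` they multiply. -/
lemma sum_regroup {M : Type*} [AddCommGroup M] [Module k M] (d N : ℕ) (W : ℕ → ℕ → M)
    (h0 : ∀ q, W 0 q = 0) (h0' : ∀ p, W p 0 = 0) :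
    ∑ p ∈ range (N + 1), ∑ q ∈ range (N + 1), eps k d N p q •
      (((d - p : k) * (d - q)) • W p q
        - ((d - p : k) * (2 * d - 2 * p - (N - p - q))) • W p (q + 1)
        + ((d - q : k) * (2 * d - 2 * q - (N - p - q))) • W (p + 1) q
        + ((N - p - q : k) * (4 * d - 2 * p - 2 * q - 1 - (N - p - q))) • W (p + 1) (q + 1))
      = ∑ p ∈ range (N + 2), ∑ q ∈ range (N + 2), coef k d N p q • W p q := by
  have e1 : ∀ q, eps k d N (N + 1) q = 0 := fun q => if_neg (by omega)
  have e2 : ∀ p, eps k d N p (N + 1) = 0 := fun p => if_neg (by omega)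
  have s1 : ∑ p ∈ range (N + 2), ∑ q ∈ range (N + 2),
        ((d - p : k) * (d - q) * eps k d N p q) • W p q
      = ∑ p ∈ range (N + 1), ∑ q ∈ range (N + 1),
        ((d - p : k) * (d - q) * eps k d N p q) • W p q := by
    rw [Finset.sum_range_succ]
    simp [e1, Finset.sum_range_succ _ (N + 1), e2]
  have s2 : ∑ p ∈ range (N + 2), ∑ q ∈ range (N + 2),
        ((d - p : k) * (2 * d - 2 * p - (N + 1 - p - q)) * eps k d N p (q - 1)) • W p q
      = ∑ p ∈ range (N + 1), ∑ q ∈ range (N + 1),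
        ((d - p : k) * (2 * d - 2 * p - (N - p - q)) * eps k d N p q) • W p (q + 1) := by
    rw [Finset.sum_range_succ]
    simp only [e1, mul_zero, zero_smul, Finset.sum_const_zero, add_zero]
    refine Finset.sum_congr rfl fun p _ => ?_
    rw [sum_range_drop_zero _ _ (by simp [h0'])]
    refine Finset.sum_congr rfl fun q _ => ?_
    push_cast [Nat.add_sub_cancel]
    congr 1
    ring
  have s3 : ∑ p ∈ range (N + 2), ∑ q ∈ range (N + 2),
        ((d - q : k) * (2 * d - 2 * q - (N + 1 - p - q)) * eps k d N (p - 1) q) • W p q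
      = ∑ p ∈ range (N + 1), ∑ q ∈ range (N + 1),
        ((d - q : k) * (2 * d - 2 * q - (N - p - q)) * eps k d N p q) • W (p + 1) q := by
    rw [sum_range_drop_zero _ _ (by simp [h0])]
    refine Finset.sum_congr rfl fun p _ => ?_
    rw [Finset.sum_range_succ]
    simp only [e2, mul_zero, zero_smul, add_zero]
    refine Finset.sum_congr rfl fun q _ => ?_
    push_cast [Nat.add_sub_cancel]
    congr 1
    ring
  have s4 : ∑ p ∈ range (N + 2), ∑ q ∈ range (N + 2),
        ((N + 2 - p - q : k) * (4 * d - 2 * p - 2 * q + 2 - (N + 1 - p - q)) *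
          eps k d N (p - 1) (q - 1)) • W p q
      = ∑ p ∈ range (N + 1), ∑ q ∈ range (N + 1),
        ((N - p - q : k) * (4 * d - 2 * p - 2 * q - 1 - (N - p - q)) * eps k d N p q) •
          W (p + 1) (q + 1) := by
    rw [sum_range_drop_zero _ _ (by simp [h0])]
    refine Finset.sum_congr rfl fun p _ => ?_
    rw [sum_range_drop_zero _ _ (by simp [h0'])]
    refine Finset.sum_congr rfl fun q _ => ?_
    push_cast [Nat.add_sub_cancel]
    congr 1
    ring
  simp only [coef, add_smul, sub_smul, Finset.sum_add_distrib, Finset.sum_sub_distrib,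
    s1, s2, s3, s4, smul_add, smul_sub, smul_smul]
  simp only [mul_comm (eps k d N _ _)]

lemma U_one_mul_U_self {d : ℕ} (r : ℕ) (hr : 1 ≤ r) (hrd : 2 * r ≤ d + 1)
    {A B : MvPolynomial (Fin 2) k} (hA : A.IsHomogeneous d) (hB : B.IsHomogeneous d) :
    U 1 A B * U (2 * r - 1) A B = ∑ i ∈ Icc 1 r, ∑ j ∈ Icc 1 r,
      (2 * coef k d (2 * r - 1) (2 * i - 1) (2 * j - 1)) •
        U (2 * r - (2 * i - 1) - (2 * j - 1)) (U (2 * i - 1) A B) (U (2 * j - 1) A B) := by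
  obtain ⟨N, hN⟩ : ∃ N, N = 2 * r - 1 := ⟨_, rfl⟩
  have hNo : (-1 : k) ^ N = -1 := Odd.neg_one_pow ⟨r - 1, by omega⟩
  have hself : ∀ F : MvPolynomial (Fin 2) k, U 1 F F = 0 := fun F => by
    rw [U_succ, U_zero, U_zero]; ring
  let V : ℕ → ℕ → MvPolynomial (Fin 2) k := fun p q => U (N + 1 - p - q) (U p A B) (U q A B)
  -- `W` is `V` antisymmetrised in both pairs; it vanishes for `p` or `q` even.
  let W : ℕ → ℕ → MvPolynomial (Fin 2) k := fun p q =>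
    ((1 - (-1) ^ p) * (1 - (-1) ^ q) : k) • V p q
  have t1 := U_one_mul_U (k := k) N (by omega) (by omega) hA hB hA hB
  have t2 := U_one_mul_U (k := k) N (by omega) (by omega) hA hB hB hA
  have t3 := U_one_mul_U (k := k) N (by omega) (by omega) hB hA hA hB
  have t4 := U_one_mul_U (k := k) N (by omega) (by omega) hB hA hB hA
  have hW : (2 : k) • (U 1 A B * U N A B)
      = ∑ p ∈ range (N + 2), ∑ q ∈ range (N + 2), coef k d N p q • W p q := by
    rw [← sum_regroup d N W (fun q => by simp [W]) (fun p => by simp [W])]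
    have hl : (2 : k) • (U 1 A B * U N A B)
        = U 1 A A * U N B B - U 1 A B * U N B A - U 1 B A * U N A B + U 1 B B * U N A A := by
      rw [hself, hself, U_swap N A B, U_swap 1 A B, hNo, two_smul]
      simp
    rw [hl, t1, t2, t3, t4]
    simp only [← Finset.sum_add_distrib, ← Finset.sum_sub_distrib]
    refine Finset.sum_congr rfl fun p _ => Finset.sum_congr rfl fun q _ => ?_
    simp only [W, V, U_swap _ A B, map_smul, LinearMap.smul_apply]
    module
  have hev : ∀ n : ℕ, (1 - (-1 : k) ^ (2 * n)) = 0 := fun n => by simp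
  rw [show N + 2 = 2 * r + 1 by omega, sum_range_odd r _
    (fun n => by simp only [W, hev]; simp)] at hW
  have h2 : (2 : k) ≠ 0 := two_ne_zero
  rw [← hN]
  apply smul_right_injective _ h2
  simp only []
  rw [hW, Finset.smul_sum]
  refine Finset.sum_congr rfl fun i hi => ?_
  rw [Finset.smul_sum, sum_range_odd r _ (fun n => by simp only [W, hev]; simp)]
  refine Finset.sum_congr rfl fun j hj => ?_
  have ho : ∀ i ∈ Icc 1 r, (-1 : k) ^ (2 * i - 1) = -1 := fun i hi =>
    Odd.neg_one_pow ⟨i - 1, by simp at hi; omega⟩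
  simp only [W, V, ho i hi, ho j hj, smul_smul, show N + 1 = 2 * r by omega]
  congr 1
  ring

end

/-! ### Cayley's operator and sums over unordered pairs -/

/-- The explicit sum in `transvectant` is the iterated Cayley operator. -/
lemma sum_eq_U (q : ℕ) (F G : MvPolynomial (Fin 2) k) :
    ∑ i ∈ Finset.range (q + 1),
      MvPolynomial.C ((-1 : k) ^ i * (q.choose i : k)) *
        ((fun P => pderiv (0 : Fin 2) P)^[q - i] ((fun P => pderiv (1 : Fin 2) P)^[i] F)) *
        ((fun P => pderiv (0 : Fin 2) P)^[i] ((fun P => pderiv (1 : Fin 2) P)^[q - i] G))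
      = U q F G := by
  set d0 : MvPolynomial (Fin 2) k → MvPolynomial (Fin 2) k := fun P => pderiv (0 : Fin 2) P with hd0
  set d1 : MvPolynomial (Fin 2) k → MvPolynomial (Fin 2) k := fun P => pderiv (1 : Fin 2) P with hd1
  have hc : Function.Commute d1 d0 := fun P => D_comm P
  have main : ∀ (q : ℕ) (F G : MvPolynomial (Fin 2) k),
      ∑ ij ∈ antidiagonal q, q.choose ij.1 •
        ((-1) ^ ij.1 * (d0^[ij.2] (d1^[ij.1] F)) * (d0^[ij.1] (d1^[ij.2] G))) = U q F G := by
    intro q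
    induction q with
    | zero => intro F G; simp [U_zero]
    | succ q ih =>
      intro F G
      rw [Finset.sum_antidiagonal_choose_succ_nsmul (fun i j =>
        (-1) ^ i * (d0^[j] (d1^[i] F)) * (d0^[i] (d1^[j] G))), U_succ, ← ih, ← ih,
        sub_eq_add_neg, ← Finset.sum_neg_distrib]
      congr 1
      · refine Finset.sum_congr rfl fun ij _ => ?_
        rw [Function.iterate_succ_apply, Function.iterate_succ_apply,
          ← (hc.iterate_left ij.1).eq]
        rfl
      · refine Finset.sum_congr rfl fun ij hij => ?_
        rw [Function.iterate_succ_apply, Function.iterate_succ_apply,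
          ← (hc.iterate_left ij.2).eq, ← Nat.choose_symm_of_eq_add (mem_antidiagonal.1 hij).symm,
          ← smul_neg]
        congr 1
        change _ = -((-1) ^ ij.1 * (d0^[ij.2] (d1^[ij.1] (d1 F))) * (d0^[ij.1] (d1^[ij.2] (d0 G))))
        ring
  rw [← main, Finset.Nat.sum_antidiagonal_eq_sum_range_succ_mk]
  refine Finset.sum_congr rfl fun i _ => ?_
  simp only [map_mul, map_pow, map_neg, map_one, map_natCast, nsmul_eq_mul]
  ring

/-- For a symmetric `S`, a sum over unordered pairs with off-diagonal terms counted twice is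
the sum over ordered pairs. -/
lemma sum_symm {M : Type*} [AddCommGroup M] [Module k M] (r : ℕ) (S : ℕ → ℕ → M)
    (hS : ∀ i j, S j i = S i j) :
    ∑ p ∈ (Icc 1 r ×ˢ Icc 1 r).filter (fun p => p.1 ≤ p.2 ∧ p.1 + p.2 ≤ r + 1),
        (if p.1 = p.2 then (1 : k) else 2) • S p.1 p.2
      = ∑ p ∈ (Icc 1 r ×ˢ Icc 1 r).filter (fun p => p.1 + p.2 ≤ r + 1), S p.1 p.2 := by
  have h1 : ∀ p : ℕ × ℕ, (if p.1 = p.2 then (1 : k) else 2) • S p.1 p.2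
      = S p.1 p.2 + if p.1 < p.2 ∨ p.2 < p.1 then S p.1 p.2 else 0 := fun p => by
    rcases lt_trichotomy p.1 p.2 with h | h | h
    · simp [h, h.ne, two_smul]
    · simp [h]
    · simp [h, h.ne', two_smul]
  have h2 : ∑ p ∈ (Icc 1 r ×ˢ Icc 1 r).filter (fun p => p.1 ≤ p.2 ∧ p.1 + p.2 ≤ r + 1),
        (if p.1 < p.2 ∨ p.2 < p.1 then S p.1 p.2 else 0)
      = ∑ p ∈ (Icc 1 r ×ˢ Icc 1 r).filter (fun p => p.2 < p.1 ∧ p.1 + p.2 ≤ r + 1),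
        S p.1 p.2 := by
    rw [← Finset.sum_filter, Finset.filter_filter]
    refine Finset.sum_nbij' Prod.swap Prod.swap ?_ ?_ (fun _ _ => rfl) (fun _ _ => rfl)
      (fun p _ => hS _ _)
    · intro p hp
      simp only [mem_filter, mem_product, mem_Icc, Prod.fst_swap, Prod.snd_swap] at hp ⊢
      omega
    · intro p hp
      simp only [mem_filter, mem_product, mem_Icc, Prod.fst_swap, Prod.snd_swap] at hp ⊢
      omega
  rw [Finset.sum_congr rfl (fun p _ => h1 p), Finset.sum_add_distrib, h2,
    ← Finset.sum_union (Finset.disjoint_left.2 fun p hp hp' => by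
      simp only [mem_filter] at hp hp'
      omega)]
  refine Finset.sum_congr ?_ fun _ _ => rfl
  ext p
  simp only [mem_union, mem_filter, mem_product, mem_Icc]
  omega

/-! ### Evaluation of the coefficients -/

lemma eps_of_eq {d N p q s x y z X Y u v : ℕ} (hs : N = p + q + s) (hx : d = p + x)
    (hy : d = q + y) (hz : d = N + z) (hX : 2 * d - 1 + q = N + p + X)
    (hY : 2 * d - 1 + p = N + q + Y) (hu : 2 * d = p + u) (hv : 2 * d = q + v) :
    eps k d N p q = (-1) ^ p * (N.factorial / (p.factorial * q.factorial * s.factorial)) *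
      ((x.factorial * y.factorial) / z.factorial ^ 2) *
      ((X.factorial * Y.factorial) / (u.factorial * v.factorial)) := by
  rw [eps, if_pos (by omega), show N - p - q = s by omega, show d - p = x by omega,
    show d - q = y by omega, show d - N = z by omega, show 2 * d - 1 + q - N - p = X by omega,
    show 2 * d - 1 + p - N - q = Y by omega, show 2 * d - p = u by omega,
    show 2 * d - q = v by omega]

lemma coef_eq_zero {d r i j : ℕ} (hr : 1 ≤ r) (hi : 1 ≤ i) (hj : 1 ≤ j)
    (hij : r + 1 < i + j) :
    coef k d (2 * r - 1) (2 * i - 1) (2 * j - 1) = 0 := by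
  have h : ∀ p q, 2 * r ≤ p + q → eps k d (2 * r - 1) p q = 0 := fun p q hpq =>
    if_neg (by omega)
  rw [coef, h _ _ (by omega), h _ _ (by omega), h _ _ (by omega), h _ _ (by omega)]
  ring

lemma cast_factorial_succ (n : ℕ) : ((n + 1).factorial : k) = (n + 1) * n.factorial := by
  rw [Nat.factorial_succ]; push_cast; ring

variable [CharZero k]

/-! The four lemmas below compare the four values of `eps` in `coef` with a common product of
factorials, according to the parities of the last two arguments of `eps`. Lower-case and capital
letters stand for factorials, and `c`-prefixed ones for the factors by which these change. -/

lemma ratio_even_even {n a b s x y t X Y u v ca cb cs cx cy : k} (hs : cs ≠ 0) (ha : ca ≠ 0)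
    (hb : cb ≠ 0) :
    cs * (1 * (n / (a * b * (cs * s))) * ((cx * x * (cy * y)) / t ^ 2) * ((X * Y) / (u * v)))
      = n / (ca * a * (cb * b) * s) * ((x * y) / t ^ 2) * ((X * Y) / (u * v)) *
        (ca * cb * cx * cy) := by
  simp only [div_eq_mul_inv, mul_inv]
  linear_combination n * a⁻¹ * b⁻¹ *
    s⁻¹ * x * y * (t ^ 2)⁻¹ * X * Y * u⁻¹ * v⁻¹ * cx * cy * (
    mul_inv_cancel₀ hs - cb * cb⁻¹ * mul_inv_cancel₀ ha - mul_inv_cancel₀ hb)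

lemma ratio_odd_odd {n a b s x y t X Y u v cs cu cv : k} (hs : cs ≠ 0) (hu : cu ≠ 0)
    (hv : cv ≠ 0) :
    -1 * (n / (a * b * s)) * ((x * y) / t ^ 2) * ((X * Y) / (u * v))
      = -(n / (a * b * (cs * s)) * ((x * y) / t ^ 2) * ((X * Y) / (cu * u * (cv * v)))) *
        (cs * cu * cv) := by
  simp only [div_eq_mul_inv, mul_inv]
  linear_combination n * a⁻¹ * b⁻¹ *
    s⁻¹ * x * y * (t ^ 2)⁻¹ * X * Y * u⁻¹ * v⁻¹ * (
    cu * cu⁻¹ * cv * cv⁻¹ * mul_inv_cancel₀ hs + cv * cv⁻¹ * mul_inv_cancel₀ hu + mul_inv_cancel₀ hv)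

lemma ratio_odd_even {n a b s x y t X Y u v cb cu cx cX cy cY : k} (hb : cb ≠ 0) (hu : cu ≠ 0) :
    cx * cX * (-1 * (n / (a * b * s)) * ((x * (cy * y)) / t ^ 2) * ((X * (cY * Y)) / (u * v)))
      = -(n / (a * (cb * b) * s) * ((x * y) / t ^ 2) * ((cX * X * Y) / (cu * u * v))) *
        (cx * cb * cy * cY * cu) := by
  simp only [div_eq_mul_inv, mul_inv]
  linear_combination n * a⁻¹ * b⁻¹ *
    s⁻¹ * x * y * (t ^ 2)⁻¹ * X * Y * u⁻¹ * v⁻¹ * cx * cX * cy * cY * (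
    cu * cu⁻¹ * mul_inv_cancel₀ hb + mul_inv_cancel₀ hu)

lemma ratio_even_odd {n a b s x y t X Y u v ca cv cx cX cy cY : k} (ha : ca ≠ 0) (hv : cv ≠ 0) :
    cy * cY * (1 * (n / (a * b * s)) * ((cx * x * y) / t ^ 2) * ((cX * X * Y) / (u * v)))
      = n / (ca * a * b * s) * ((x * y) / t ^ 2) * ((X * (cY * Y)) / (u * (cv * v))) *
        (cy * ca * cx * cX * cv) := by
  simp only [div_eq_mul_inv, mul_inv]
  linear_combination n * a⁻¹ * b⁻¹ *
    s⁻¹ * x * y * (t ^ 2)⁻¹ * X * Y * u⁻¹ * v⁻¹ * cx * cX * cy * cY * (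
    -(cv * cv⁻¹ * mul_inv_cancel₀ ha) - mul_inv_cancel₀ hv)

set_option maxHeartbeats 1000000 in
/-- Closed form of `coef` at `p = 2I + 1`, `q = 2J + 1`, `N = p + q - 1 + 2σ`, `d = N + t`. -/
lemma coef_eq (I J σ t : ℕ) :
    coef k (2 * I + 2 * J + 1 + 2 * σ + t) (2 * I + 2 * J + 1 + 2 * σ) (2 * I + 1) (2 * J + 1)
      = ((2 * I + 2 * J + 1 + 2 * σ).factorial /
          ((2 * I + 1).factorial * (2 * J + 1).factorial * (2 * σ).factorial)) *
        (((2 * J + 2 * σ + t).factorial * (2 * I + 2 * σ + t).factorial) / t.factorial ^ 2) *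
        (((4 * J + 2 * σ + 2 * t).factorial * (4 * I + 2 * σ + 2 * t).factorial) /
          ((2 * I + 4 * J + 4 * σ + 2 * t + 2).factorial *
            (4 * I + 2 * J + 4 * σ + 2 * t + 2).factorial)) *
        (2 * (2 * I + 2 * J + 1 + 2 * σ + t) *
          (2 * (2 * I + 2 * J + 1 + 2 * σ + t) * (I + 1)
            + 2 * (2 * I + 2 * J + 1 + 2 * σ + t) * (J + 1)
            - (2 * I + 2 * J + 1 + 2 * σ + t) * (I + J + 1 + σ)
            - 2 * (I + 1) ^ 2 - 2 * (J + 1) ^ 2 - 2 * (2 * I + 2 * J + 1 + 2 * σ + t)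
            + 3 * (I + 1) + 3 * (J + 1) - 2) *
          (4 * J + 4 * σ + 2 * t + 1) * (4 * I + 4 * σ + 2 * t + 1)) := by
  -- The common product of factorials; `e1` to `e4` express the four values of `eps` through it.
  set E : k := ((2 * I + 2 * J + 1 + 2 * σ).factorial /
          ((2 * I + 1).factorial * (2 * J + 1).factorial * (2 * σ).factorial)) *
        (((2 * J + 2 * σ + t).factorial * (2 * I + 2 * σ + t).factorial) / t.factorial ^ 2) *
        (((4 * J + 2 * σ + 2 * t).factorial * (4 * I + 2 * σ + 2 * t).factorial) /
          ((2 * I + 4 * J + 4 * σ + 2 * t + 2).factorial *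
            (4 * I + 2 * J + 4 * σ + 2 * t + 2).factorial)) with hE
  have hodd : ∀ n : ℕ, (-1 : k) ^ (2 * n + 1) = -1 := fun n => Odd.neg_one_pow ⟨n, rfl⟩
  have hev : ∀ n : ℕ, (-1 : k) ^ (2 * n) = 1 := fun n => Even.neg_one_pow ⟨n, by ring⟩
  have nz : ∀ n : ℕ, (n + 1 : k) ≠ 0 := fun n => Nat.cast_add_one_ne_zero n
  have n6 : (2 * I + 1 : k) ≠ 0 := by exact_mod_cast nz (2 * I)
  have n7 : (2 * J + 1 : k) ≠ 0 := by exact_mod_cast nz (2 * J)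
  have n8 : (2 * I + 4 * J + 4 * σ + 2 * t + 2 : k) ≠ 0 := by
    exact_mod_cast nz (2 * I + 4 * J + 4 * σ + 2 * t + 1)
  have n9 : (4 * I + 2 * J + 4 * σ + 2 * t + 2 : k) ≠ 0 := by
    exact_mod_cast nz (4 * I + 2 * J + 4 * σ + 2 * t + 1)
  have n11 : (2 * σ + 1 : k) ≠ 0 := by exact_mod_cast nz (2 * σ)
  have f1 := cast_factorial_succ (k := k) (2 * I)
  have f2 := cast_factorial_succ (k := k) (2 * J)
  have f3 : ((2 * I + 4 * J + 4 * σ + 2 * t + 2).factorial : k)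
      = (2 * I + 4 * J + 4 * σ + 2 * t + 2) * (2 * I + 4 * J + 4 * σ + 2 * t + 1).factorial := by
    rw [cast_factorial_succ]; push_cast; ring
  have f4 : ((4 * I + 2 * J + 4 * σ + 2 * t + 2).factorial : k)
      = (4 * I + 2 * J + 4 * σ + 2 * t + 2) * (4 * I + 2 * J + 4 * σ + 2 * t + 1).factorial := by
    rw [cast_factorial_succ]; push_cast; ring
  have f5 := cast_factorial_succ (k := k) (2 * J + 2 * σ + t)
  have f6 := cast_factorial_succ (k := k) (2 * I + 2 * σ + t)
  have f7 := cast_factorial_succ (k := k) (4 * J + 2 * σ + 2 * t)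
  have f8 := cast_factorial_succ (k := k) (4 * I + 2 * σ + 2 * t)
  have f9 := cast_factorial_succ (k := k) (2 * σ)
  push_cast at f1 f2 f5 f6 f7 f8 f9
  have e4 : (2 * σ + 1) * eps k (2 * I + 2 * J + 1 + 2 * σ + t) (2 * I + 2 * J + 1 + 2 * σ)
      (2 * I) (2 * J) = E * ((2 * I + 1) * (2 * J + 1) * (2 * J + 2 * σ + t + 1)
        * (2 * I + 2 * σ + t + 1)) := by
    rw [eps_of_eq (s := 2 * σ + 1) (x := 2 * J + 2 * σ + t + 1) (y := 2 * I + 2 * σ + t + 1)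
      (z := t) (X := 4 * J + 2 * σ + 2 * t) (Y := 4 * I + 2 * σ + 2 * t)
      (u := 2 * I + 4 * J + 4 * σ + 2 * t + 2) (v := 4 * I + 2 * J + 4 * σ + 2 * t + 2)
      (by ring) (by ring) (by ring) rfl (by omega) (by omega) (by ring) (by ring), hE, hev,
      f1, f2, f5, f6, f9]
    exact ratio_even_even n11 n6 n7
  have e1 : eps k (2 * I + 2 * J + 1 + 2 * σ + t) (2 * I + 2 * J + 1 + 2 * σ)
      (2 * I + 1) (2 * J + 1) = - E * (2 * σ * (2 * I + 4 * J + 4 * σ + 2 * t + 2)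
        * (4 * I + 2 * J + 4 * σ + 2 * t + 2)) := by
    rcases Nat.eq_zero_or_pos σ with h | h
    · rw [eps, if_neg (by omega), h]; simp
    · obtain ⟨m, hm⟩ : ∃ m, 2 * σ = m + 1 := ⟨2 * σ - 1, by omega⟩
      have hmk : (2 * σ : k) = m + 1 := by exact_mod_cast hm
      rw [eps_of_eq (s := m) (x := 2 * J + 2 * σ + t) (y := 2 * I + 2 * σ + t)
        (z := t) (X := 4 * J + 2 * σ + 2 * t) (Y := 4 * I + 2 * σ + 2 * t)
        (u := 2 * I + 4 * J + 4 * σ + 2 * t + 1)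
        (v := 4 * I + 2 * J + 4 * σ + 2 * t + 1)
        (by omega) (by ring) (by ring) rfl (by omega) (by omega) (by ring) (by ring), hE, hodd,
        f3, f4, show ((2 * σ).factorial : k) = (2 * σ) * m.factorial by
          rw [hmk, hm, cast_factorial_succ]]
      exact ratio_odd_odd (by rw [hmk]; exact nz m) n8 n9
  have e2 : (2 * J + 2 * σ + t) * (4 * J + 2 * σ + 2 * t) *
      eps k (2 * I + 2 * J + 1 + 2 * σ + t) (2 * I + 2 * J + 1 + 2 * σ) (2 * I + 1) (2 * J)
      = - E * ((2 * J + 2 * σ + t) * (2 * J + 1) * (2 * I + 2 * σ + t + 1) *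
        (4 * I + 2 * σ + 2 * t + 1) * (2 * I + 4 * J + 4 * σ + 2 * t + 2)) := by
    -- For `J = σ = t = 0` the argument `X` of `eps_of_eq` would be `-1`, but both sides vanish.
    rcases Nat.eq_zero_or_pos (J + σ + t) with h | h
    · obtain ⟨rfl, rfl, rfl⟩ : J = 0 ∧ σ = 0 ∧ t = 0 := by omega
      simp
    · obtain ⟨m, hm⟩ : ∃ m, 4 * J + 2 * σ + 2 * t = m + 1 := ⟨4 * J + 2 * σ + 2 * t - 1, by omega⟩
      have hmk : (4 * J + 2 * σ + 2 * t : k) = m + 1 := by exact_mod_cast hm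
      rw [eps_of_eq (s := 2 * σ) (x := 2 * J + 2 * σ + t) (y := 2 * I + 2 * σ + t + 1)
        (z := t) (X := m) (Y := 4 * I + 2 * σ + 2 * t + 1)
        (u := 2 * I + 4 * J + 4 * σ + 2 * t + 1)
        (v := 4 * I + 2 * J + 4 * σ + 2 * t + 2)
        (by ring) (by ring) (by ring) rfl (by omega) (by omega) (by ring) (by ring), hE, hodd,
        f3, f2, f6, f8, show ((4 * J + 2 * σ + 2 * t).factorial : k)
          = (4 * J + 2 * σ + 2 * t) * m.factorial by rw [hmk, hm, cast_factorial_succ]]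
      exact ratio_odd_even n7 n8
  have e3 : (2 * I + 2 * σ + t) * (4 * I + 2 * σ + 2 * t) *
      eps k (2 * I + 2 * J + 1 + 2 * σ + t) (2 * I + 2 * J + 1 + 2 * σ) (2 * I) (2 * J + 1)
      = E * ((2 * I + 2 * σ + t) * (2 * I + 1) * (2 * J + 2 * σ + t + 1) *
        (4 * J + 2 * σ + 2 * t + 1) * (4 * I + 2 * J + 4 * σ + 2 * t + 2)) := by
    rcases Nat.eq_zero_or_pos (I + σ + t) with h | h
    · obtain ⟨rfl, rfl, rfl⟩ : I = 0 ∧ σ = 0 ∧ t = 0 := by omega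
      simp
    · obtain ⟨m, hm⟩ : ∃ m, 4 * I + 2 * σ + 2 * t = m + 1 := ⟨4 * I + 2 * σ + 2 * t - 1, by omega⟩
      have hmk : (4 * I + 2 * σ + 2 * t : k) = m + 1 := by exact_mod_cast hm
      rw [eps_of_eq (s := 2 * σ) (x := 2 * J + 2 * σ + t + 1) (y := 2 * I + 2 * σ + t)
        (z := t) (X := 4 * J + 2 * σ + 2 * t + 1) (Y := m)
        (u := 2 * I + 4 * J + 4 * σ + 2 * t + 2)
        (v := 4 * I + 2 * J + 4 * σ + 2 * t + 1)
        (by ring) (by ring) (by ring) rfl (by omega) (by omega) (by ring) (by ring), hE, hev,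
        f4, f1, f5, f7, show ((4 * I + 2 * σ + 2 * t).factorial : k)
          = (4 * I + 2 * σ + 2 * t) * m.factorial by rw [hmk, hm, cast_factorial_succ]]
      exact ratio_even_odd n6 n9
  rw [coef, Nat.add_sub_cancel, Nat.add_sub_cancel]
  push_cast
  linear_combination (2 * J + 2 * σ + t : k) * (2 * I + 2 * σ + t) * e1 - e2 + e3
    + (4 * I + 4 * J + 6 * σ + 4 * t + 2 : k) * e4

/-- Comparison of `coef` with the coefficients `N₁/N₂` of the normalised transvectants. -/
lemma coef_eq_N1_div_N2 {d r i j : ℕ} (hrd : 2 * r ≤ d + 1) (hi : 1 ≤ i) (hj : 1 ≤ j)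
    (hij : i + j ≤ r + 1) :
    (((d - 1).factorial : k) * (d - (2 * r - 1)).factorial / d.factorial ^ 2) ^ 2 *
        coef k d (2 * r - 1) (2 * i - 1) (2 * j - 1)
      = 2 * (((N1 d r i j / N2 d r i j : ℚ)) : k) *
        (((2 * d + 2 - 4 * i - 2 * (r + 1 - i - j)).factorial *
            (2 * d + 2 - 4 * j - 2 * (r + 1 - i - j)).factorial /
          ((2 * d + 2 - 4 * i).factorial * (2 * d + 2 - 4 * j).factorial)) *
        (((d - (2 * i - 1)).factorial * (d - (2 * j - 1)).factorial) ^ 2 / d.factorial ^ 4)) := by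
  obtain ⟨I, rfl⟩ := Nat.exists_eq_add_of_le' hi
  obtain ⟨J, rfl⟩ := Nat.exists_eq_add_of_le' hj
  obtain ⟨σ, hσ⟩ : ∃ σ, r = I + J + 1 + σ := ⟨r - (I + J + 1), by omega⟩
  subst hσ
  obtain ⟨t, ht⟩ : ∃ t, d = 2 * I + 2 * J + 1 + 2 * σ + t :=
    ⟨d - (2 * I + 2 * J + 1 + 2 * σ), by omega⟩
  subst ht
  have hfac := fun n : ℕ => (Nat.cast_ne_zero (R := k)).2 n.factorial_ne_zero
  rw [N1, N2]
  rw [show 2 * (I + J + 1 + σ) - 1 = 2 * I + 2 * J + 1 + 2 * σ by omega,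
    show 2 * (I + 1) - 1 = 2 * I + 1 by omega, show 2 * (J + 1) - 1 = 2 * J + 1 by omega, coef_eq,
    show 2 * I + 2 * J + 1 + 2 * σ + t - (2 * I + 2 * J + 1 + 2 * σ) = t by omega,
    show 2 * I + 2 * J + 1 + 2 * σ + t - 1 = 2 * I + 2 * J + 2 * σ + t by omega,
    show 2 * I + 2 * J + 1 + 2 * σ + t - (2 * I + 1) = 2 * J + 2 * σ + t by omega,
    show 2 * I + 2 * J + 1 + 2 * σ + t - (2 * J + 1) = 2 * I + 2 * σ + t by omega,
    show 2 * I + 2 * J + 1 + 2 * σ + t + 1 - 2 * (I + 1) = 2 * J + 2 * σ + t by omega,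
    show 2 * I + 2 * J + 1 + 2 * σ + t + 1 - 2 * (J + 1) = 2 * I + 2 * σ + t by omega,
    show 2 * (2 * I + 2 * J + 1 + 2 * σ + t) + 2 - 4 * (I + 1)
      - 2 * (I + J + 1 + σ + 1 - (I + 1) - (J + 1)) = 4 * J + 2 * σ + 2 * t by omega,
    show 2 * (2 * I + 2 * J + 1 + 2 * σ + t) + 2 - 4 * (J + 1)
      - 2 * (I + J + 1 + σ + 1 - (I + 1) - (J + 1)) = 4 * I + 2 * σ + 2 * t by omega,
    show 2 * (2 * I + 2 * J + 1 + 2 * σ + t) + 2 - 4 * (I + 1) = 4 * J + 4 * σ + 2 * t by omega,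
    show 2 * (2 * I + 2 * J + 1 + 2 * σ + t) + 2 - 4 * (J + 1) = 4 * I + 4 * σ + 2 * t by omega,
    show 2 * (2 * I + 2 * J + 1 + 2 * σ + t) + 3 - 4 * (I + 1) = 4 * J + 4 * σ + 2 * t + 1 by omega,
    show 2 * (2 * I + 2 * J + 1 + 2 * σ + t) + 3 - 4 * (J + 1) = 4 * I + 4 * σ + 2 * t + 1 by omega,
    show 2 * (2 * I + 2 * J + 1 + 2 * σ + t) + 2 - 2 * (I + 1)
      = 2 * I + 4 * J + 4 * σ + 2 * t + 2 by omega,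
    show 2 * (2 * I + 2 * J + 1 + 2 * σ + t) + 2 - 2 * (J + 1)
      = 4 * I + 2 * J + 4 * σ + 2 * t + 2 by omega,
    show 2 * (I + J + 1 + σ) + 2 - 2 * (I + 1) - 2 * (J + 1) = 2 * σ by omega]
  push_cast
  have f1 := cast_factorial_succ (k := k) (4 * J + 4 * σ + 2 * t)
  have f2 := cast_factorial_succ (k := k) (4 * I + 4 * σ + 2 * t)
  have f3 : ((2 * I + 2 * J + 1 + 2 * σ + t).factorial : k)
      = (2 * I + 2 * J + 1 + 2 * σ + t) * (2 * I + 2 * J + 2 * σ + t).factorial := by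
    rw [show 2 * I + 2 * J + 1 + 2 * σ + t = 2 * I + 2 * J + 2 * σ + t + 1 by ring,
      cast_factorial_succ]
    push_cast; ring
  have m3 : (2 * I + 2 * J + 1 + 2 * σ + t : k) ≠ 0 := by
    have := Nat.succ_ne_zero (2 * I + 2 * J + 2 * σ + t)
    have h : ((2 * I + 2 * J + 2 * σ + t + 1 : ℕ) : k) ≠ 0 := by exact_mod_cast this
    push_cast at h
    convert h using 1
    ring
  push_cast at f1 f2
  rw [f1, f2, f3]
  have n1 := hfac (4 * J + 4 * σ + 2 * t)
  have n2 := hfac (4 * I + 4 * σ + 2 * t)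
  have n3 := hfac (2 * I + 2 * J + 2 * σ + t)
  have n4 := hfac t
  have n5 := hfac (2 * I + 1)
  have n6 := hfac (2 * J + 1)
  have n7 := hfac (2 * σ)
  have n8 := hfac (2 * I + 4 * J + 4 * σ + 2 * t + 2)
  have n9 := hfac (4 * I + 2 * J + 4 * σ + 2 * t + 2)
  have n10 := hfac (2 * J + 2 * σ + t)
  have n11 := hfac (2 * I + 2 * σ + t)
  field_simp

/-! ### The syzygy -/

lemma transvectant_eq (m n q : ℕ) (F G : MvPolynomial (Fin 2) k) :
    transvectant m n q F G =
      ((((m - q).factorial * (n - q).factorial) / (m.factorial * n.factorial) : k)) • U q F G := by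
  rw [transvectant, sum_eq_U, smul_eq_C_mul]
  push_cast
  rfl

/-- The scalar relating the covariant `((A, B)_{2i-1}, (A, B)_{2j-1})_{2(r+1-i-j)}` to its
unnormalised counterpart. -/
noncomputable def nu (k : Type*) [Field k] (d r i j : ℕ) : k :=
  ((2 * d + 2 - 4 * i - 2 * (r + 1 - i - j)).factorial *
      (2 * d + 2 - 4 * j - 2 * (r + 1 - i - j)).factorial /
    ((2 * d + 2 - 4 * i).factorial * (2 * d + 2 - 4 * j).factorial)) *
  (((d - (2 * i - 1)).factorial * (d - (2 * j - 1)).factorial) ^ 2 / d.factorial ^ 4)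

lemma nu_swap (d r i j : ℕ) : nu k d r j i = nu k d r i j := by
  rw [nu, nu, show r + 1 - j - i = r + 1 - i - j by omega]
  ring

lemma theta_swap (d r i j : ℕ) : theta d r j i = theta d r i j := by
  rw [theta, theta, N1, N1, N2, N2,
    show 2 * r + 2 - 2 * j - 2 * i = 2 * r + 2 - 2 * i - 2 * j by omega]
  push_cast
  ring

lemma transvectant_transvectant (d r i j : ℕ) (A B : MvPolynomial (Fin 2) k) :
    transvectant (2 * d + 2 - 4 * i) (2 * d + 2 - 4 * j) (2 * (r + 1 - i - j))
      (transvectant d d (2 * i - 1) A B) (transvectant d d (2 * j - 1) A B)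
      = nu k d r i j • U (2 * (r + 1 - i - j)) (U (2 * i - 1) A B) (U (2 * j - 1) A B) := by
  have hd : ((d.factorial : ℕ) : k) ≠ 0 := Nat.cast_ne_zero.2 d.factorial_ne_zero
  rw [transvectant_eq, transvectant_eq, transvectant_eq, map_smul, map_smul, LinearMap.smul_apply,
    smul_smul, smul_smul, nu]
  congr 1
  simp only [div_eq_mul_inv, mul_inv, mul_pow]
  ring

/-- The terms `8 N₁/N₂` add up to `2 (A, B)₁ (A, B)_{2r-1}`. -/
lemma sum_N1_div_N2 {d r : ℕ} {A B : MvPolynomial (Fin 2) k} (hr : 1 ≤ r) (hrd : 2 * r ≤ d + 1)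
    (hA : A.IsHomogeneous d) (hB : B.IsHomogeneous d) :
    ∑ p ∈ (Icc 1 r ×ˢ Icc 1 r).filter (fun p => p.1 + p.2 ≤ r + 1),
        ((8 * N1 d r p.1 p.2 / N2 d r p.1 p.2 : ℚ) : k) • nu k d r p.1 p.2 •
          U (2 * (r + 1 - p.1 - p.2)) (U (2 * p.1 - 1) A B) (U (2 * p.2 - 1) A B)
      = (2 * nu k d r 1 r) • (U 1 A B * U (2 * r - 1) A B) := by
  rw [U_one_mul_U_self r hr hrd hA hB, ← Finset.sum_product', Finset.smul_sum,
    Finset.sum_filter]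
  refine Finset.sum_congr rfl fun p hp => ?_
  simp only [mem_product, mem_Icc] at hp
  split_ifs with h
  · have key := coef_eq_N1_div_N2 (k := k) hrd hp.1.1 hp.2.1 h
    have hnu : nu k d r 1 r
        = (((d - 1).factorial : k) * (d - (2 * r - 1)).factorial / d.factorial ^ 2) ^ 2 := by
      have hf := fun n : ℕ => (Nat.cast_ne_zero (R := k)).2 n.factorial_ne_zero
      rw [nu, show r + 1 - 1 - r = 0 by omega, Nat.mul_zero, Nat.sub_zero, Nat.sub_zero,
        div_self (mul_ne_zero (hf _) (hf _)), one_mul, div_pow, ← pow_mul]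
    rw [show 2 * r - (2 * p.1 - 1) - (2 * p.2 - 1) = 2 * (r + 1 - p.1 - p.2) by omega, smul_smul,
      smul_smul]
    congr 1
    rw [← nu, ← hnu] at key
    push_cast at key ⊢
    linear_combination -4 * key
  · rw [coef_eq_zero hr hp.1.1 hp.2.1 (by omega), mul_zero, zero_smul, smul_zero]

/-- The two Kronecker deltas contribute `2 (A, B)₁ (A, B)_{2r-1}`. -/
lemma sum_delta {d r : ℕ} (hr : 1 ≤ r) (A B : MvPolynomial (Fin 2) k) :
    ∑ p ∈ (Icc 1 r ×ˢ Icc 1 r).filter (fun p => p.1 + p.2 ≤ r + 1),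
        ((if p.1 = 1 then 1 else 0) * (if p.2 = r then 1 else 0)
          + (if p.1 = r then 1 else 0) * (if p.2 = 1 then 1 else 0) : k) • nu k d r p.1 p.2 •
          U (2 * (r + 1 - p.1 - p.2)) (U (2 * p.1 - 1) A B) (U (2 * p.2 - 1) A B)
      = (2 * nu k d r 1 r) • (U 1 A B * U (2 * r - 1) A B) := by
  simp only [add_smul, Finset.sum_add_distrib]
  rw [Finset.sum_eq_single_of_mem (1, r) (by simp; omega),
    Finset.sum_eq_single_of_mem (r, 1) (by simp; omega)]
  · simp only [if_true, mul_one, one_smul, nu_swap d r 1 r]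
    rw [show r + 1 - 1 - r = 0 by omega, show r + 1 - r - 1 = 0 by omega, Nat.mul_zero, U_zero,
      U_zero, mul_comm (U (2 * r - 1) A B), ← two_smul k, smul_smul]
  · rintro ⟨a, b⟩ _ h
    have : ¬ (a = r ∧ b = 1) := fun h' => h (by rw [h'.1, h'.2])
    split_ifs <;> simp_all
  · rintro ⟨a, b⟩ _ h
    have : ¬ (a = 1 ∧ b = r) := fun h' => h (by rw [h'.1, h'.2])
    split_ifs <;> simp_all

end QuadraticSyzygy

open QuadraticSyzygy

/-- Main theorem: the explicit quadratic syzygy of weight `2r` among the linear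
combinants `𝒞_{2i−1} = (A,B)_{2i−1}` of a pencil of binary `d`-ics:
`Σ α_{i,j} (𝒞_{2i−1}, 𝒞_{2j−1})_{2(r−i−j+1)} = 0`, the sum over pairs `(i,j)` with
`1 ≤ i ≤ j ≤ r` and `i+j ≤ r+1`. -/
theorem main_quadratic_syzygy {k : Type*} [Field k] [CharZero k]
    (d r : ℕ) (hr : 3 ≤ r) (hrd : 2 * r ≤ d + 1)
    (A B : MvPolynomial (Fin 2) k)
    (hA : A.IsHomogeneous d) (hB : B.IsHomogeneous d) :
    ∑ p ∈ (Finset.Icc 1 r ×ˢ Finset.Icc 1 r).filter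
        (fun p => p.1 ≤ p.2 ∧ p.1 + p.2 ≤ r + 1),
      C ((alpha d r p.1 p.2 : ℚ) : k) *
        transvectant (2 * d + 2 - 4 * p.1) (2 * d + 2 - 4 * p.2)
          (2 * (r + 1 - p.1 - p.2))
          (transvectant d d (2 * p.1 - 1) A B)
          (transvectant d d (2 * p.2 - 1) A B) = 0 := by
  set S : ℕ → ℕ → MvPolynomial (Fin 2) k := fun i j =>
    ((theta d r i j : ℚ) : k) • nu k d r i j •
      U (2 * (r + 1 - i - j)) (U (2 * i - 1) A B) (U (2 * j - 1) A B) with hSdef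
  have hS : ∀ i j, S j i = S i j := fun i j => by
    simp only [hSdef]
    rw [theta_swap, nu_swap, show r + 1 - j - i = r + 1 - i - j by omega, U_swap,
      Even.neg_one_pow (even_two_mul _), one_smul]
  have h1 : ∀ p : ℕ × ℕ, C ((alpha d r p.1 p.2 : ℚ) : k) *
        transvectant (2 * d + 2 - 4 * p.1) (2 * d + 2 - 4 * p.2) (2 * (r + 1 - p.1 - p.2))
          (transvectant d d (2 * p.1 - 1) A B) (transvectant d d (2 * p.2 - 1) A B)
      = (if p.1 = p.2 then (1 : k) else 2) • S p.1 p.2 := fun p => by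
    rw [transvectant_transvectant, ← smul_eq_C_mul, alpha, hSdef, smul_smul _ _ (nu k d r _ _ • _)]
    congr 1
    split_ifs <;> push_cast <;> rfl
  have h2 : ∀ p : ℕ × ℕ, S p.1 p.2
      = ((if p.1 = 1 then 1 else 0) * (if p.2 = r then 1 else 0)
          + (if p.1 = r then 1 else 0) * (if p.2 = 1 then 1 else 0) : k) • nu k d r p.1 p.2 •
          U (2 * (r + 1 - p.1 - p.2)) (U (2 * p.1 - 1) A B) (U (2 * p.2 - 1) A B)
        - ((8 * N1 d r p.1 p.2 / N2 d r p.1 p.2 : ℚ) : k) • nu k d r p.1 p.2 •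
          U (2 * (r + 1 - p.1 - p.2)) (U (2 * p.1 - 1) A B) (U (2 * p.2 - 1) A B) := fun p => by
    rw [← sub_smul]
    simp only [hSdef, theta]
    push_cast
    simp only [apply_ite (Rat.cast : ℚ → k), Rat.cast_one, Rat.cast_zero]
  rw [Finset.sum_congr rfl fun p _ => h1 p, sum_symm r S hS, Finset.sum_congr rfl fun p _ => h2 p,
    Finset.sum_sub_distrib, sum_N1_div_N2 (by omega) hrd hA hB, sum_delta (by omega), sub_self]
end

section
/- Positivity of the leading syzygy coefficient. Let d, r be integers with 3 ≤ r ≤ (d+1)/2. With N₁(i,j) = (2di + 2dj − dr − 2i² − 2j² − 2d + 3i + 3j − 2) · d!·(d−1)!·(2r−1)!·(2d−4i+3)!·(2d−4j+3)!, N₂(i,j) = (2i−1)!·(2j−1)!·(d−2i+1)!·(d−2j+1)!·(2d−2i+2)!·(2d−2j+2)!·(2r−2i−2j+2)!, and θ_{1,r} = 1 − 8·N₁(1,r)/N₂(1,r), the coefficient α_{1,r} = 2·θ_{1,r} is strictly positive. -/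
open Nat in
/-- The inequality `8·N₁(1,r) < N₂(1,r)` after cancellation, with `r = s + 3` and
`d = 2r - 1 + m`. -/
lemma key_factorial_lt (s m : ℕ) :
    4 * ((s + 3) * m + (2 * s + 5)) * (2 * s + 4 + m)! * (2 * m + 1)! <
      m ! * (2 * s + 6 + 2 * m)! := by
  induction m with
  | zero =>
    have h1 : (2 * s + 6)! = (2 * s + 6) * ((2 * s + 5) * (2 * s + 4)!) := by
      rw [Nat.factorial_succ (2 * s + 5), Nat.factorial_succ (2 * s + 4)]
    simp only [mul_zero, add_zero, zero_add, Nat.factorial_zero, Nat.factorial_one, mul_one,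
      one_mul, h1]
    have := Nat.factorial_pos (2 * s + 4)
    have h2 : 0 < (2 * s + 5) * (2 * s + 4)! := by positivity
    nlinarith
  | succ m ih =>
    have e1 : (2 * s + 4 + (m + 1))! = (2 * s + 5 + m) * (2 * s + 4 + m)! := by
      rw [← add_assoc, Nat.factorial_succ]; ring
    have e2 : (2 * (m + 1) + 1)! = (2 * m + 3) * ((2 * m + 2) * (2 * m + 1)!) := by
      rw [show 2 * (m + 1) + 1 = 2 * m + 1 + 1 + 1 by ring, Nat.factorial_succ,
        Nat.factorial_succ]
    have e3 : (2 * s + 6 + 2 * (m + 1))! =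
        (2 * s + 8 + 2 * m) * ((2 * s + 7 + 2 * m) * (2 * s + 6 + 2 * m)!) := by
      rw [show 2 * s + 6 + 2 * (m + 1) = 2 * s + 6 + 2 * m + 1 + 1 by ring,
        Nat.factorial_succ, Nat.factorial_succ]; ring
    rw [e1, e2, e3, Nat.factorial_succ m]
    generalize (2 * s + 4 + m)! = A at *
    generalize (2 * m + 1)! = B at *
    generalize (2 * s + 6 + 2 * m)! = C at *
    generalize m ! = D at *
    -- The ratio comparison, with the common factor `m + 1` removed.
    have hp : ((s + 3) * (m + 1) + (2 * s + 5)) * (2 * s + 5 + m) * (2 * (2 * m + 3)) ≤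
        ((s + 3) * m + (2 * s + 5)) * ((2 * s + 8 + 2 * m) * (2 * s + 7 + 2 * m)) := by
      zify
      have : (0 : ℤ) ≤ s := by positivity
      have : (0 : ℤ) ≤ m := by positivity
      rw [← sub_nonneg]
      ring_nf
      positivity
    have hq : 0 < (m + 1) * ((2 * s + 8 + 2 * m) * (2 * s + 7 + 2 * m)) := by positivity
    calc 4 * ((s + 3) * (m + 1) + (2 * s + 5)) * ((2 * s + 5 + m) * A) *
            ((2 * m + 3) * ((2 * m + 2) * B))
        = (((s + 3) * (m + 1) + (2 * s + 5)) * (2 * s + 5 + m) * (2 * (2 * m + 3))) *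
            (4 * (m + 1) * A * B) := by ring
      _ ≤ (((s + 3) * m + (2 * s + 5)) * ((2 * s + 8 + 2 * m) * (2 * s + 7 + 2 * m))) *
            (4 * (m + 1) * A * B) := Nat.mul_le_mul_right _ hp
      _ = ((m + 1) * ((2 * s + 8 + 2 * m) * (2 * s + 7 + 2 * m))) *
            (4 * ((s + 3) * m + (2 * s + 5)) * A * B) := by ring
      _ < ((m + 1) * ((2 * s + 8 + 2 * m) * (2 * s + 7 + 2 * m))) * (D * C) :=
          Nat.mul_lt_mul_of_pos_left ih hq
      _ = (m + 1) * D * ((2 * s + 8 + 2 * m) * ((2 * s + 7 + 2 * m) * C)) := by ring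

/-- Positivity of the leading syzygy coefficient:
`α_{1,r} = 2·θ_{1,r} = 2·(1 − 8·N₁(1,r)/N₂(1,r)) > 0` for `3 ≤ r ≤ (d+1)/2`. -/
theorem alpha_one_r_pos (d r : ℕ) (hr : 3 ≤ r) (hrd : 2 * r ≤ d + 1) :
    0 < 2 * (1 - 8 * N1 d r 1 r / N2 d r 1 r) := by
  obtain ⟨s, rfl⟩ := Nat.exists_eq_add_of_le' hr
  obtain ⟨m, rfl⟩ : ∃ m, d = 2 * s + 5 + m := ⟨d - (2 * s + 5), by omega⟩
  have hN2 : 0 < N2 (2 * s + 5 + m) (s + 3) 1 (s + 3) := by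
    unfold N2
    exact_mod_cast (by positivity)
  suffices h : 8 * N1 (2 * s + 5 + m) (s + 3) 1 (s + 3) < N2 (2 * s + 5 + m) (s + 3) 1 (s + 3) by
    have := (div_lt_one hN2).2 h
    linarith
  have key : (4 * ((s + 3) * m + (2 * s + 5)) * (2 * s + 4 + m).factorial *
      (2 * m + 1).factorial : ℚ) < m.factorial * (2 * s + 6 + 2 * m).factorial := by
    exact_mod_cast key_factorial_lt s m
  unfold N1 N2
  rw [show 2 * s + 5 + m - 1 = 2 * s + 4 + m by omega,
    show 2 * (s + 3) - 1 = 2 * s + 5 by omega,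
    show 2 * (2 * s + 5 + m) + 3 - 4 * 1 = 4 * s + 9 + 2 * m by omega,
    show 2 * (2 * s + 5 + m) + 3 - 4 * (s + 3) = 2 * m + 1 by omega,
    show 2 * 1 - 1 = 1 by omega,
    show 2 * s + 5 + m + 1 - 2 * 1 = 2 * s + 4 + m by omega,
    show 2 * s + 5 + m + 1 - 2 * (s + 3) = m by omega,
    show 2 * (2 * s + 5 + m) + 2 - 2 * 1 = 4 * s + 9 + 2 * m + 1 by omega,
    show 2 * (2 * s + 5 + m) + 2 - 2 * (s + 3) = 2 * s + 6 + 2 * m by omega,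
    show 2 * (s + 3) + 2 - 2 * 1 - 2 * (s + 3) = 0 by omega,
    Nat.factorial_succ (4 * s + 9 + 2 * m),
    show (2 * s + 5 + m).factorial = (2 * s + 5 + m) * (2 * s + 4 + m).factorial by
      rw [show 2 * s + 5 + m = 2 * s + 4 + m + 1 by ring, Nat.factorial_succ]]
  have hA : (0 : ℚ) < (2 * s + 4 + m).factorial := by exact_mod_cast Nat.factorial_pos _
  have hE : (0 : ℚ) < (2 * s + 5).factorial := by exact_mod_cast Nat.factorial_pos _
  have hF : (0 : ℚ) < (4 * s + 9 + 2 * m).factorial := by exact_mod_cast Nat.factorial_pos _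
  simp only [Nat.factorial_one, Nat.factorial_zero]
  push_cast
  generalize ((2 * s + 4 + m).factorial : ℚ) = A at *
  generalize ((2 * m + 1).factorial : ℚ) = B at *
  generalize ((2 * s + 6 + 2 * m).factorial : ℚ) = C at *
  generalize (m.factorial : ℚ) = D at *
  generalize ((2 * s + 5).factorial : ℚ) = E at *
  generalize ((4 * s + 9 + 2 * m).factorial : ℚ) = F at *
  -- The common factor of both sides is `2d·(d-1)!·(2r-1)!·(2d-1)!`.
  have hG : (0 : ℚ) < 2 * (2 * s + 5 + m) * A * E * F := by positivity
  have := mul_lt_mul_of_pos_left key hG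
  linarith
end

section
/- For all integers d, r with r ≥ 3 and d ≥ 2r−1, the inequality 4·(d·r − 2r² + 3r − 1) · ((d−1)!·(2d−4r+3)!) / ((d−2r+1)!·(2d−2r+2)!) < 1 holds (as an inequality of rational numbers). -/
/-!
Put `n = d - 2r + 1 ≥ 0`. Then `dr - 2r² + 3r - 1 = nr + 2r - 1`, and after clearing denominators
the claim reads `4 (nr + 2r - 1) (n + 2r - 2)! (2n + 1)! < n! (2n + 2r)!`. This is proved by
induction on `r ≥ 3` with `n` fixed (`factorial_ineq`, with `r = s + 3`).

For `r = 3`, cancelling the factorials reduces it to `(3n + 5)(n + 4) < 2 (2n + 3)(2n + 5)`. Passing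
from `r` to `r + 1` multiplies the right side by `(2n + 2r + 1)(2n + 2r + 2)` and the left side by
`(n + 2r - 1)(n + 2r)` times the ratio of the linear factors, which is no larger: this is the
polynomial inequality `step_ineq`.
-/

/-- The growth factor of the left side is at most that of the right side when `r = s + 3` increases
by one. -/
lemma step_ineq (n s : ℕ) :
    (n * (s + 4) + 2 * s + 7) * ((n + 2 * s + 6) * (n + 2 * s + 5)) ≤
      (n * (s + 3) + 2 * s + 5) * ((2 * n + 2 * s + 8) * (2 * n + 2 * s + 7)) := by
  zify
  rw [← sub_nonneg]
  ring_nf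
  positivity

lemma factorial_ineq (n s : ℕ) :
    4 * (n * (s + 3) + 2 * s + 5) * ((n + 2 * s + 4).factorial * (2 * n + 1).factorial) <
      n.factorial * (2 * n + 2 * s + 6).factorial := by
  induction s with
  | zero =>
    have h : 4 * (n * 3 + 5) * ((n + 4) * (n + 3) * (n + 2) * (n + 1)) <
        (2 * n + 6) * (2 * n + 5) * (2 * n + 4) * (2 * n + 3) * (2 * n + 2) := by
      zify
      rw [← sub_pos]
      ring_nf
      positivity
    have hp : 0 < n.factorial * (2 * n + 1).factorial := by positivity
    have := Nat.mul_lt_mul_of_pos_right h hp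
    simp only [Nat.factorial_succ, mul_zero, add_zero, zero_add] at this ⊢
    nlinarith
  | succ s ih =>
    have e1 : (n + 2 * (s + 1) + 4).factorial =
        (n + 2 * s + 6) * ((n + 2 * s + 5) * (n + 2 * s + 4).factorial) := by
      rw [← Nat.factorial_succ, ← Nat.factorial_succ]
      congr 1
    have e2 : (2 * n + 2 * (s + 1) + 6).factorial =
        (2 * n + 2 * s + 8) * ((2 * n + 2 * s + 7) * (2 * n + 2 * s + 6).factorial) := by
      rw [← Nat.factorial_succ, ← Nat.factorial_succ]
      congr 1
    rw [e1, e2]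
    generalize (n + 2 * s + 4).factorial = A at *
    generalize (2 * n + 1).factorial = B at *
    generalize (2 * n + 2 * s + 6).factorial = C at *
    calc 4 * (n * (s + 1 + 3) + 2 * (s + 1) + 5) *
          ((n + 2 * s + 6) * ((n + 2 * s + 5) * A) * B)
        = (n * (s + 4) + 2 * s + 7) * ((n + 2 * s + 6) * (n + 2 * s + 5)) * (4 * (A * B)) := by
          ring
      _ ≤ (n * (s + 3) + 2 * s + 5) * ((2 * n + 2 * s + 8) * (2 * n + 2 * s + 7)) *
            (4 * (A * B)) := Nat.mul_le_mul_right _ (step_ineq n s)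
      _ = 4 * (n * (s + 3) + 2 * s + 5) * (A * B) *
            ((2 * n + 2 * s + 8) * (2 * n + 2 * s + 7)) := by ring
      _ < n.factorial * C * ((2 * n + 2 * s + 8) * (2 * n + 2 * s + 7)) :=
          Nat.mul_lt_mul_of_pos_right ih (by positivity)
      _ = _ := by ring

/-- For all integers `r ≥ 3` and `d ≥ 2r−1`,
`4·(dr − 2r² + 3r − 1)·((d−1)!·(2d−4r+3)!)/((d−2r+1)!·(2d−2r+2)!) < 1`. -/
theorem elementary_inequality (d r : ℕ) (hr : 3 ≤ r) (hd : 2 * r - 1 ≤ d) :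
    4 * ((d : ℚ) * r - 2 * r ^ 2 + 3 * r - 1) *
        (((d - 1).factorial * (2 * d + 3 - 4 * r).factorial : ℕ) : ℚ) /
        (((d + 1 - 2 * r).factorial * (2 * d + 2 - 2 * r).factorial : ℕ) : ℚ) < 1 := by
  obtain ⟨s, rfl⟩ := Nat.exists_eq_add_of_le' hr
  obtain ⟨n, rfl⟩ : ∃ n, d = n + 2 * s + 5 := ⟨d - (2 * s + 5), by omega⟩
  have e1 : n + 2 * s + 5 - 1 = n + 2 * s + 4 := by omega
  have e2 : 2 * (n + 2 * s + 5) + 3 - 4 * (s + 3) = 2 * n + 1 := by omega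
  have e3 : n + 2 * s + 5 + 1 - 2 * (s + 3) = n := by omega
  have e4 : 2 * (n + 2 * s + 5) + 2 - 2 * (s + 3) = 2 * n + 2 * s + 6 := by omega
  rw [e1, e2, e3, e4, div_lt_one (by positivity)]
  have h : ((4 * (n * (s + 3) + 2 * s + 5) *
      ((n + 2 * s + 4).factorial * (2 * n + 1).factorial) : ℕ) : ℚ) <
      ((n.factorial * (2 * n + 2 * s + 6).factorial : ℕ) : ℚ) :=
    Nat.cast_lt.mpr (factorial_ineq n s)
  refine lt_of_eq_of_lt ?_ h
  push_cast
  ring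
end

section
/- Define Γ(r,d) = 4·(d·r − 2r² + 3r − 1) · ((d−1)!·(2d−4r+3)!) / ((d−2r+1)!·(2d−2r+2)!) as a rational number, for integers r ≥ 3 and d ≥ 2r−1. Then Γ(r, d+1) < Γ(r, d), i.e., Γ(r, ·) is strictly decreasing in d on the range d ≥ 2r−1. -/
/-!
Writing `d = 2r - 1 + m` with `m ≥ 0` turns `Γ(r,d)` into
`4·((m+2)r - 1)·(2r-2+m)!·(2m+1)! / (m!·(2r+2m)!)`. Cancelling factorials in the quotient of
consecutive values, `Γ(r,d+1) < Γ(r,d)` is equivalent to the polynomial inequality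
`((m+3)r - 1)(2r-1+m)(2m+3) < ((m+2)r - 1)(2r+2m+1)(r+m+1)`.
After the substitution `r = s + 3` the difference of the two sides has only nonnegative
coefficients in `s, m` and a positive constant term.
-/

/-- `Γ(r,d) = 4·(dr − 2r² + 3r − 1)·((d−1)!·(2d−4r+3)!)/((d−2r+1)!·(2d−2r+2)!)`. -/
noncomputable def Gamma (r d : ℕ) : ℚ :=
  4 * ((d : ℚ) * r - 2 * r ^ 2 + 3 * r - 1) *
      (((d - 1).factorial * (2 * d + 3 - 4 * r).factorial : ℕ) : ℚ) /
      (((d + 1 - 2 * r).factorial * (2 * d + 2 - 2 * r).factorial : ℕ) : ℚ)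

/-- `Γ` in the shifted parameters `r = s + 3`, `d = 2r - 1 + m`, free of truncated subtraction. -/
lemma Gamma_shift (s m : ℕ) :
    Gamma (s + 3) (2 * s + 5 + m) =
      4 * (((m : ℚ) + 2) * (s + 3) - 1) *
        (((2 * s + 4 + m).factorial : ℚ) * ((2 * m + 1).factorial : ℚ)) /
        ((m.factorial : ℚ) * ((2 * s + 6 + 2 * m).factorial : ℚ)) := by
  have h1 : 2 * s + 5 + m - 1 = 2 * s + 4 + m := by omega
  have h2 : 2 * (2 * s + 5 + m) + 3 - 4 * (s + 3) = 2 * m + 1 := by omega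
  have h3 : 2 * s + 5 + m + 1 - 2 * (s + 3) = m := by omega
  have h4 : 2 * (2 * s + 5 + m) + 2 - 2 * (s + 3) = 2 * s + 6 + 2 * m := by omega
  unfold Gamma
  rw [h1, h2, h3, h4]
  push_cast
  congr 2
  ring

/-- The polynomial inequality governing the ratio of consecutive values, with `r = s + 3`. -/
lemma ratio_poly_lt (s m : ℚ) (hs : 0 ≤ s) (hm : 0 ≤ m) :
    ((m + 3) * (s + 3) - 1) * (2 * s + 5 + m) * (2 * m + 3) <
      ((m + 2) * (s + 3) - 1) * (2 * s + 2 * m + 7) * (s + m + 4) := by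
  rw [← sub_pos]
  ring_nf
  positivity

/-- `Γ(r, ·)` is strictly decreasing in `d` on the range `d ≥ 2r−1`, for `r ≥ 3`. -/
theorem Gamma_strict_anti (r d : ℕ) (hr : 3 ≤ r) (hd : 2 * r - 1 ≤ d) :
    Gamma r (d + 1) < Gamma r d := by
  obtain ⟨s, rfl⟩ : ∃ s, r = s + 3 := ⟨r - 3, by omega⟩
  obtain ⟨m, rfl⟩ : ∃ m, d = 2 * s + 5 + m := ⟨d - (2 * s + 5), by omega⟩
  have e1 : 2 * s + 4 + (m + 1) = (2 * s + 4 + m) + 1 := by ring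
  have e2 : 2 * (m + 1) + 1 = (2 * m + 1) + 1 + 1 := by ring
  have e3 : 2 * s + 6 + 2 * (m + 1) = (2 * s + 6 + 2 * m) + 1 + 1 := by ring
  rw [add_assoc (2 * s + 5) m 1, Gamma_shift, Gamma_shift, e1, e2, e3]
  simp only [Nat.factorial_succ (2 * s + 4 + m), Nat.factorial_succ (2 * m + 1),
    Nat.factorial_succ (2 * m + 1 + 1), Nat.factorial_succ m,
    Nat.factorial_succ (2 * s + 6 + 2 * m), Nat.factorial_succ (2 * s + 6 + 2 * m + 1)]
  have hA : (0 : ℚ) < (2 * s + 4 + m).factorial := by exact_mod_cast Nat.factorial_pos _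
  have hB : (0 : ℚ) < (2 * m + 1).factorial := by exact_mod_cast Nat.factorial_pos _
  have hC : (0 : ℚ) < m.factorial := by exact_mod_cast Nat.factorial_pos _
  have hD : (0 : ℚ) < (2 * s + 6 + 2 * m).factorial := by exact_mod_cast Nat.factorial_pos _
  push_cast
  generalize ((2 * s + 4 + m).factorial : ℚ) = A at *
  generalize ((2 * m + 1).factorial : ℚ) = B at *
  generalize (m.factorial : ℚ) = C at *
  generalize ((2 * s + 6 + 2 * m).factorial : ℚ) = D at *
  have key := ratio_poly_lt s m (by positivity) (by positivity)
  rw [div_lt_div_iff₀ (by positivity) (by positivity)]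
  -- The common factor of both cross products; `2(m+1)` comes from `2m+2` and `2s+2m+8`.
  have hK : (0 : ℚ) < 8 * (m + 1) * A * B * C * D := by positivity
  linear_combination (8 * ((m : ℚ) + 1) * A * B * C * D) * key
end

section
/- Wronskian criterion for membership in a pencil. Let d ≥ 2 and let A, B be linearly independent binary forms of order d over a field of characteristic zero. A binary form F of order d belongs to the span of {A, B} if and only if the 3×3 determinant W with rows (∂²A/∂x₁², ∂²A/∂x₁∂x₂, ∂²A/∂x₂²), (∂²B/∂x₁², ∂²B/∂x₁∂x₂, ∂²B/∂x₂²), (∂²F/∂x₁², ∂²F/∂x₁∂x₂, ∂²F/∂x₂²) is the zero polynomial. -/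
/-!
If `F` is in the span, the rows of the matrix are dependent. For the converse, dehomogenize: a
binary form `A` of order `d` is determined by `a(t) = A(t, 1)`, and by Euler's identity
the second partials of `A` at `(t, 1)` are combinations of `a''`, `a'`, `a`. Column
operations turn the determinant `W` into `-d (d - 1)²` times the classical Wronskian of three
univariate polynomials `a, b, f` (`dehomog_det`).

It remains to show that a vanishing Wronskian forces linear dependence over `k`. For two polynomials
this follows by dividing by the gcd: coprime polynomials with zero Wronskian have zero derivatives,
hence are constants in characteristic zero (`exists_relation_of_wronskian_eq_zero`). For three, write
`w(p, q) = p q' - p' q`, and `W(a, b, f)` for the classical Wronskian. The identity `w(w(a, b), w(a, f)) = a · W(a, b, f)` reduces to the case of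
two polynomials applied twice: first `w(a, α b + β f) = α w(a, b) + β w(a, f) = 0` for some
`(α, β) ≠ 0`, and then `a` and `α b + β f` are dependent (`exists_relation_three`).
-/

open MvPolynomial

namespace WronskianPencil

variable {k : Type*} [Field k]

/-- Two univariate polynomials over a field of characteristic zero whose Wronskian vanishes are
linearly dependent over the field of constants. -/
lemma exists_relation_of_wronskian_eq_zero [CharZero k] (p q : Polynomial k)
    (h : Polynomial.wronskian p q = 0) :
    ∃ u v : k, (u ≠ 0 ∨ v ≠ 0) ∧ u • p + v • q = 0 := by
  classical
  by_cases hp : p = 0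
  · exact ⟨1, 0, by simp, by simp [hp]⟩
  obtain ⟨g, p', q', hpq, rfl, rfl⟩ :
      ∃ g p' q' : Polynomial k, IsCoprime p' q' ∧ p = g * p' ∧ q = g * q' := by
    have hg : EuclideanDomain.gcd p q ≠ 0 := fun h0 => hp (EuclideanDomain.gcd_eq_zero_iff.1 h0).1
    obtain ⟨p', hp'⟩ := EuclideanDomain.gcd_dvd_left p q
    obtain ⟨q', hq'⟩ := EuclideanDomain.gcd_dvd_right p q
    refine ⟨EuclideanDomain.gcd p q, p', q', ?_, hp', hq'⟩
    refine ⟨EuclideanDomain.gcdA p q, EuclideanDomain.gcdB p q, mul_left_cancel₀ hg ?_⟩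
    have := EuclideanDomain.gcd_eq_gcd_ab p q
    linear_combination (-1 : Polynomial k) * this - EuclideanDomain.gcdA p q * hp'
      - EuclideanDomain.gcdB p q * hq'
  have hg : g ≠ 0 := left_ne_zero_of_mul hp
  have hw : Polynomial.wronskian p' q' = 0 := by
    have h2 : g ^ 2 * Polynomial.wronskian p' q' = 0 := by
      rw [← h]
      simp only [Polynomial.wronskian, Polynomial.derivative_mul]
      ring
    exact (mul_eq_zero.1 h2).resolve_left (pow_ne_zero 2 hg)
  obtain ⟨h1, h2⟩ := hpq.wronskian_eq_zero_iff.1 hw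
  have e1 := Polynomial.eq_C_of_derivative_eq_zero h1
  have e2 := Polynomial.eq_C_of_derivative_eq_zero h2
  have hp0 : p'.coeff 0 ≠ 0 := by
    intro h0
    rw [h0, Polynomial.C_0] at e1
    exact hp (by rw [e1, mul_zero])
  refine ⟨q'.coeff 0, -p'.coeff 0, Or.inr (neg_ne_zero.2 hp0), ?_⟩
  rw [e1, e2]
  simp only [Polynomial.smul_eq_C_mul, Polynomial.coeff_C_zero, Polynomial.C_neg]
  ring

/-- Three univariate polynomials over a field of characteristic zero whose Wronskian vanishes are
linearly dependent over the field of constants. -/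
lemma exists_relation_three [CharZero k] (a b f : Polynomial k)
    (h : Matrix.det
      !![a, a.derivative, a.derivative.derivative;
         b, b.derivative, b.derivative.derivative;
         f, f.derivative, f.derivative.derivative] = 0) :
    ∃ u v w : k, (u ≠ 0 ∨ v ≠ 0 ∨ w ≠ 0) ∧ u • a + v • b + w • f = 0 := by
  have h1 : Polynomial.wronskian (Polynomial.wronskian a b) (Polynomial.wronskian a f) = 0 := by
    rw [Matrix.det_fin_three] at h
    simp at h
    simp only [Polynomial.wronskian, Polynomial.derivative_mul, Polynomial.derivative_sub]
    linear_combination a * h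
  obtain ⟨α, β, hαβ, h2⟩ := exists_relation_of_wronskian_eq_zero _ _ h1
  have h3 : Polynomial.wronskian a (α • b + β • f) = 0 := by
    rw [← h2]
    simp only [← Polynomial.wronskianBilin_apply, map_add, map_smul]
  obtain ⟨γ, δ, hγδ, h4⟩ := exists_relation_of_wronskian_eq_zero _ _ h3
  refine ⟨γ, δ * α, δ * β, ?_, ?_⟩
  · by_cases hδ : δ = 0
    · exact Or.inl (hγδ.resolve_right (not_not.2 hδ))
    · exact Or.inr (hαβ.imp (mul_ne_zero hδ) (mul_ne_zero hδ))
  · rw [← h4, smul_add, smul_smul, smul_smul, add_assoc]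

/-- The dehomogenization `A ↦ A(t, 1)`. -/
noncomputable abbrev dehomog : MvPolynomial (Fin 2) k →ₐ[k] Polynomial k :=
  aeval ![Polynomial.X, 1]

lemma dehomog_pderiv_zero (A : MvPolynomial (Fin 2) k) :
    dehomog (pderiv 0 A) = (dehomog A).derivative := by
  induction A using MvPolynomial.induction_on with
  | C c => simp
  | add p q hp hq => simp only [map_add, hp, hq]
  | mul_X p i hp =>
    rw [pderiv_mul, map_add, map_mul, map_mul, map_mul, hp, Polynomial.derivative_mul]
    fin_cases i <;> simp [pderiv_X]

/-- Euler's identity at `(t, 1)`. -/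
lemma dehomog_pderiv_one {n : ℕ} {A : MvPolynomial (Fin 2) k} (hA : A.IsHomogeneous n) :
    dehomog (pderiv 1 A) = (n : Polynomial k) * dehomog A - Polynomial.X * (dehomog A).derivative := by
  have h := congrArg dehomog hA.sum_X_mul_pderiv
  rw [Fin.sum_univ_two, map_add, map_mul, map_mul, dehomog_pderiv_zero, map_nsmul] at h
  simp at h
  linear_combination h

lemma dehomog_second {d : ℕ} {A : MvPolynomial (Fin 2) k} (hA : A.IsHomogeneous (d + 2)) :
    dehomog (pderiv 0 (pderiv 0 A)) = (dehomog A).derivative.derivative ∧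
    dehomog (pderiv 0 (pderiv 1 A)) = ((d : Polynomial k) + 1) * (dehomog A).derivative
      - Polynomial.X * (dehomog A).derivative.derivative ∧
    dehomog (pderiv 1 (pderiv 1 A)) = ((d : Polynomial k) + 2) * ((d : Polynomial k) + 1) * dehomog A
      - 2 * ((d : Polynomial k) + 1) * Polynomial.X * (dehomog A).derivative
      + Polynomial.X ^ 2 * (dehomog A).derivative.derivative := by
  have h1 : (pderiv 1 A).IsHomogeneous (d + 1) := hA.pderiv
  refine ⟨?_, ?_, ?_⟩
  · rw [dehomog_pderiv_zero, dehomog_pderiv_zero]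
  · rw [dehomog_pderiv_zero, dehomog_pderiv_one hA]
    simp
    ring
  · rw [dehomog_pderiv_one h1, dehomog_pderiv_one hA]
    simp
    ring

/-- The sign comes from reversing the order of the columns. -/
lemma dehomog_det {d : ℕ} {A B F : MvPolynomial (Fin 2) k} (hA : A.IsHomogeneous (d + 2))
    (hB : B.IsHomogeneous (d + 2)) (hF : F.IsHomogeneous (d + 2)) :
    dehomog (Matrix.det
        !![pderiv (0 : Fin 2) (pderiv 0 A), pderiv 0 (pderiv 1 A), pderiv 1 (pderiv 1 A);
           pderiv 0 (pderiv 0 B), pderiv 0 (pderiv 1 B), pderiv 1 (pderiv 1 B);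
           pderiv 0 (pderiv 0 F), pderiv 0 (pderiv 1 F), pderiv 1 (pderiv 1 F)]) =
      -(((d : Polynomial k) + 2) * (d + 1) ^ 2) * Matrix.det
        !![dehomog A, (dehomog A).derivative, (dehomog A).derivative.derivative;
           dehomog B, (dehomog B).derivative, (dehomog B).derivative.derivative;
           dehomog F, (dehomog F).derivative, (dehomog F).derivative.derivative] := by
  obtain ⟨a1, a2, a3⟩ := dehomog_second hA
  obtain ⟨b1, b2, b3⟩ := dehomog_second hB
  obtain ⟨f1, f2, f3⟩ := dehomog_second hF
  rw [Matrix.det_fin_three, Matrix.det_fin_three]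
  simp only [Matrix.of_apply, Matrix.cons_val', Matrix.cons_val_zero, Matrix.cons_val_one,
    Matrix.cons_val, map_sub, map_add, map_mul, a1, a2, a3, b1, b2, b3, f1, f2, f3]
  ring

lemma eq_zero_of_dehomog_eq_zero {d : ℕ} {A : MvPolynomial (Fin 2) k} (hA : A.IsHomogeneous d)
    (h : dehomog A = 0) : A = 0 := by
  rw [← Polynomial.homogenize_eq_of_isHomogeneous hA h, Polynomial.homogenize_zero]

end WronskianPencil

open WronskianPencil

/-- Wronskian criterion for membership in a pencil: for linearly independent binary
forms `A, B` of order `d ≥ 2`, a binary form `F` of order `d` lies in the span of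
`{A, B}` iff the 3×3 Wronskian determinant of second partial derivatives vanishes. -/
theorem wronskian_pencil_criterion {k : Type*} [Field k] [CharZero k]
    (d : ℕ) (hd : 2 ≤ d)
    (A B F : MvPolynomial (Fin 2) k)
    (hA : A.IsHomogeneous d) (hB : B.IsHomogeneous d) (hF : F.IsHomogeneous d)
    (hAB : LinearIndependent k ![A, B]) :
    F ∈ Submodule.span k ({A, B} : Set (MvPolynomial (Fin 2) k)) ↔
      Matrix.det
        !![pderiv (0 : Fin 2) (pderiv 0 A), pderiv 0 (pderiv 1 A), pderiv 1 (pderiv 1 A);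
           pderiv 0 (pderiv 0 B), pderiv 0 (pderiv 1 B), pderiv 1 (pderiv 1 B);
           pderiv 0 (pderiv 0 F), pderiv 0 (pderiv 1 F), pderiv 1 (pderiv 1 F)] = 0 := by
  constructor
  · intro hFm
    obtain ⟨u, v, rfl⟩ := Submodule.mem_span_pair.1 hFm
    rw [Matrix.det_fin_three]
    simp [smul_eq_C_mul]
    ring
  · intro hW
    obtain ⟨d, rfl⟩ := Nat.exists_eq_add_of_le' hd
    have h := dehomog_det hA hB hF
    rw [hW, map_zero] at h
    have hc : -(((d : Polynomial k) + 2) * (d + 1) ^ 2) ≠ 0 := by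
      have : (((d + 2) * (d + 1) ^ 2 : ℕ) : Polynomial k) ≠ 0 :=
        Nat.cast_ne_zero.2 (by positivity)
      exact neg_ne_zero.2 (by exact_mod_cast this)
    obtain ⟨u, v, w, huvw, hrel⟩ :=
      exists_relation_three _ _ _ ((mul_eq_zero.1 h.symm).resolve_left hc)
    have hhom : (u • A + v • B + w • F).IsHomogeneous (d + 2) := by
      simp only [smul_eq_C_mul]
      exact ((hA.C_mul u).add (hB.C_mul v)).add (hF.C_mul w)
    have h0 : u • A + v • B + w • F = 0 :=
      eq_zero_of_dehomog_eq_zero hhom (by simpa only [map_add, map_smul] using hrel)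
    have hw : w ≠ 0 := by
      rintro rfl
      rw [zero_smul, add_zero] at h0
      obtain ⟨hu, hv⟩ := LinearIndependent.pair_iff.1 hAB u v h0
      simp [hu, hv] at huvw
    refine Submodule.mem_span_pair.2 ⟨-(w⁻¹ * u), -(w⁻¹ * v), ?_⟩
    have h1 : w • F = -(u • A) - v • B := by linear_combination h0
    rw [← inv_smul_smul₀ hw F, h1, smul_sub, smul_neg, smul_smul, smul_smul, neg_smul, neg_smul]
    ring
end

section
/- Base commutation identity for the Cayley Omega operator. Let 𝒢 be a polynomial in the four variables x₁, x₂, y₁, y₂ over a field of characteristic zero which is bihomogeneous of order p in (x₁,x₂) and order q in (y₁,y₂). Then Ω_{xy}((x y)·𝒢) = (p+q+2)·𝒢 + (x y)·Ω_{xy}𝒢, where Ω_{xy} = ∂²/∂x₁∂y₂ − ∂²/∂y₁∂x₂ and (x y) = x₁y₂ − y₁x₂. -/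
/-!
By the Leibniz rule, `Ω((x y)·G) - (x y)·ΩG` equals `2·G` plus the first-order terms
`x₁ ∂G/∂x₁ + x₂ ∂G/∂x₂ + y₁ ∂G/∂y₁ + y₂ ∂G/∂y₂`. Euler's identity, applied separately to the
pairs `(x₁, x₂)` and `(y₁, y₂)`, evaluates these to `p·G + q·G`.
-/

open MvPolynomial

/-- The Cayley Omega operator `Ω_{xy} = ∂²/∂x₁∂y₂ − ∂²/∂y₁∂x₂`, where the four
variables are indexed as `x₁ = 0`, `x₂ = 1`, `y₁ = 2`, `y₂ = 3`. -/
noncomputable def Omega {k : Type*} [CommRing k] (G : MvPolynomial (Fin 4) k) :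
    MvPolynomial (Fin 4) k :=
  pderiv (0 : Fin 4) (pderiv 3 G) - pderiv 2 (pderiv 1 G)

/-- The bracket factor `(x y) = x₁y₂ − y₁x₂`. -/
noncomputable def bracket {k : Type*} [CommRing k] : MvPolynomial (Fin 4) k :=
  X 0 * X 3 - X 2 * X 1

/-- A polynomial in `x₁, x₂, y₁, y₂` is bihomogeneous of orders `(p,q)` if it is
homogeneous of degree `p` in `(x₁,x₂)` and of degree `q` in `(y₁,y₂)`. -/
def Bihomogeneous {k : Type*} [CommRing k] (G : MvPolynomial (Fin 4) k)
    (p q : ℕ) : Prop :=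
  G.IsWeightedHomogeneous ![1, 1, 0, 0] p ∧ G.IsWeightedHomogeneous ![0, 0, 1, 1] q

/-- Base commutation identity for the Cayley Omega operator:
`Ω_{xy}((x y)·𝒢) = (p+q+2)·𝒢 + (x y)·Ω_{xy}𝒢` for `𝒢` bihomogeneous of orders `(p,q)`. -/
theorem omega_bracket_comm {k : Type*} [Field k] [CharZero k]
    (G : MvPolynomial (Fin 4) k) (p q : ℕ) (hG : Bihomogeneous G p q) :
    Omega (bracket * G) = C (((p + q + 2 : ℕ) : k)) * G + bracket * Omega G := by
  -- Euler's identity in each pair: `hx` in `(x₁, x₂)`, `hy` in `(y₁, y₂)`.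
  have hx := hG.1.sum_weight_X_mul_pderiv
  have hy := hG.2.sum_weight_X_mul_pderiv
  simp [Fin.sum_univ_four] at hx hy
  have h3 : pderiv 3 (bracket * G) = X 0 * G + bracket * pderiv 3 G := by
    simp [bracket, Derivation.leibniz, pderiv_X]
    ring
  have h1 : pderiv 1 (bracket * G) = -X 2 * G + bracket * pderiv 1 G := by
    simp [bracket, Derivation.leibniz, pderiv_X]
    ring
  simp only [Omega, h3, h1, map_natCast]
  simp [bracket, Derivation.leibniz, pderiv_X]
  linear_combination hx + hy
end

section
/- Lemma (part a). Let 𝒢 be a polynomial in x₁, x₂, y₁, y₂ over a field of characteristic zero which is bihomogeneous of orders (p,q), and let m ≥ 1. Then Ω_{xy}((x y)^m · 𝒢) = m·(p+q+m+1)·(x y)^{m−1}·𝒢 + (x y)^m·Ω_{xy}𝒢, where Ω_{xy} = ∂²/∂x₁∂y₂ − ∂²/∂y₁∂x₂ and (x y) = x₁y₂ − y₁x₂. -/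
/-!
Expanding `Ω((x y)^m · G)` by the Leibniz rule, the terms in which both derivatives fall on the
bracket power give `m(m-1)(x y)^(m-1) G + 2m (x y)^(m-1) G`; the mixed terms assemble into
`m (x y)^(m-1) · E G`, where `E` is the Euler operator in all four variables; and the remaining
terms give `(x y)^m · Ω G`. Euler's identity for weighted homogeneous polynomials, applied in
`(x₁, x₂)` and in `(y₁, y₂)`, yields `E G = (p + q) G`.
-/

open MvPolynomial

/-- Lemma (part a): `Ω_{xy}((x y)^m·𝒢) = m(p+q+m+1)·(x y)^{m−1}·𝒢 + (x y)^m·Ω_{xy}𝒢`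
for `𝒢` bihomogeneous of orders `(p,q)` and `m ≥ 1`. -/
theorem omega_bracket_pow_comm {k : Type*} [Field k] [CharZero k]
    (G : MvPolynomial (Fin 4) k) (p q m : ℕ) (hm : 1 ≤ m)
    (hG : Bihomogeneous G p q) :
    Omega (bracket ^ m * G)
      = C (((m * (p + q + m + 1) : ℕ) : k)) * bracket ^ (m - 1) * G
        + bracket ^ m * Omega G := by
  have e1 : X 0 * pderiv 0 G + X 1 * pderiv 1 G = (p : MvPolynomial (Fin 4) k) * G := by
    simpa [Fin.sum_univ_four] using hG.1.sum_weight_X_mul_pderiv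
  have e2 : X 2 * pderiv 2 G + X 3 * pderiv 3 G = (q : MvPolynomial (Fin 4) k) * G := by
    simpa [Fin.sum_univ_four] using hG.2.sum_weight_X_mul_pderiv
  have b0 : pderiv 0 (bracket : MvPolynomial (Fin 4) k) = X 3 := by
    simp [bracket, pderiv_X]
  have b1 : pderiv 1 (bracket : MvPolynomial (Fin 4) k) = -X 2 := by
    simp [bracket, pderiv_X]
  have b2 : pderiv 2 (bracket : MvPolynomial (Fin 4) k) = -X 1 := by
    simp [bracket, pderiv_X]
  have b3 : pderiv 3 (bracket : MvPolynomial (Fin 4) k) = X 0 := by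
    simp [bracket, pderiv_X]
  have hb : (bracket : MvPolynomial (Fin 4) k) = X 0 * X 3 - X 2 * X 1 := rfl
  have x0 : pderiv 0 (X 0 : MvPolynomial (Fin 4) k) = 1 := pderiv_X_self 0
  have x2 : pderiv 2 (X 2 : MvPolynomial (Fin 4) k) = 1 := pderiv_X_self 2
  -- The power `(x y)^(m-2)` occurs only for `m ≥ 2`, so `m = 1` is treated separately.
  obtain ⟨n, rfl⟩ : ∃ n, m = n + 1 := ⟨m - 1, by omega⟩
  rcases n with _ | n
  · simp only [Omega, zero_add, pow_one, pow_zero, pderiv_mul, map_add, map_neg, b0, b1, b2, b3,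
      x0, x2, map_natCast, Nat.sub_self]
    push_cast
    linear_combination e1 + e2
  · simp only [Omega, pderiv_mul, pderiv_pow, map_add, map_neg, b0, b1, b2, b3,
      x0, x2, map_natCast, Nat.add_sub_cancel, Derivation.map_natCast]
    push_cast
    generalize (bracket : MvPolynomial (Fin 4) k) = B at *
    linear_combination ((n : MvPolynomial (Fin 4) k) + 2) * B ^ (n + 1) * (e1 + e2)
      - ((n : MvPolynomial (Fin 4) k) + 2) * (n + 1) * B ^ n * G * hb
end

section
/- Lemma (part b). Let 𝒢 be a polynomial in x₁, x₂, y₁, y₂ over a field of characteristic zero which is bihomogeneous of orders (p,q), and let ℓ ≥ 1. Then Ω_{xy}^ℓ((x y)·𝒢) = ℓ·(p+q−ℓ+3)·Ω_{xy}^{ℓ−1}𝒢 + (x y)·Ω_{xy}^ℓ𝒢, where Ω_{xy} = ∂²/∂x₁∂y₂ − ∂²/∂y₁∂x₂ and (x y) = x₁y₂ − y₁x₂. -/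
/-!
Let `E = ∑ xᵢ ∂ᵢ` be the Euler operator. The Leibniz rule gives `Ω((x y)·F) = E F + 2F + (x y)·Ω F`
for every polynomial `F` (`Omega_bracket_mul`). A bihomogeneous `G` of orders `(p,q)` satisfies
`E G = (p+q) G`, and each partial derivative lowers the `E`-eigenvalue by one (`euler_pderiv`), so
`Ω^j G` has eigenvalue `p + q - 2j`. Iterating therefore produces the coefficient
`∑_{j<ℓ} (p + q - 2j + 2) = ℓ (p + q - ℓ + 3)`.
-/

open MvPolynomial

/-- The Euler operator `∑ xᵢ ∂/∂xᵢ` in all four variables. -/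
noncomputable def euler {k : Type*} [CommRing k] (G : MvPolynomial (Fin 4) k) :
    MvPolynomial (Fin 4) k :=
  ∑ i, X i * pderiv i G

lemma pderiv_swap {k : Type*} [CommRing k] (i j : Fin 4) (G : MvPolynomial (Fin 4) k) :
    pderiv i (pderiv j G) = pderiv j (pderiv i G) := by
  have h : ⁅pderiv (R := k) i, pderiv (R := k) j⁆ = 0 := by
    apply MvPolynomial.derivation_ext
    intro m
    simp only [Derivation.commutator_apply, pderiv_X, Pi.single_apply, Derivation.zero_apply]
    split_ifs <;> simp
  have h2 := congrArg (fun D => D G) h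
  simpa [Derivation.commutator_apply, sub_eq_zero] using h2

lemma euler_pderiv {k : Type*} [CommRing k] {G : MvPolynomial (Fin 4) k} {c : k}
    (h : euler G = C c * G) (i : Fin 4) :
    euler (pderiv i G) = C (c - 1) * pderiv i G := by
  have h1 : pderiv i (euler G) = euler (pderiv i G) + pderiv i G := by
    simp only [euler, map_sum, Derivation.leibniz, smul_eq_mul, pderiv_X, Pi.single_apply,
      Finset.sum_add_distrib, pderiv_swap i]
    simp
  rw [h, Derivation.leibniz, pderiv_C, smul_zero, add_zero, smul_eq_mul] at h1
  rw [C_sub, C_1]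
  linear_combination -h1

lemma Omega_C_mul {k : Type*} [CommRing k] (c : k) (G : MvPolynomial (Fin 4) k) :
    Omega (C c * G) = C c * Omega G := by
  simp [Omega, mul_sub]

lemma Omega_add {k : Type*} [CommRing k] (F G : MvPolynomial (Fin 4) k) :
    Omega (F + G) = Omega F + Omega G := by
  simp only [Omega, map_add]
  ring

lemma euler_Omega {k : Type*} [CommRing k] {G : MvPolynomial (Fin 4) k} {c : k}
    (h : euler G = C c * G) : euler (Omega G) = C (c - 2) * Omega G := by
  have h1 := euler_pderiv (euler_pderiv h 3) 0
  have h2 := euler_pderiv (euler_pderiv h 1) 2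
  have h3 : euler (Omega G) = euler (pderiv 0 (pderiv 3 G)) - euler (pderiv 2 (pderiv 1 G)) := by
    simp only [euler, Omega, map_sub, mul_sub, Finset.sum_sub_distrib]
  rw [h3, h1, h2, Omega, show c - 1 - 1 = c - 2 by ring]
  ring

lemma euler_Omega_iterate {k : Type*} [CommRing k] {G : MvPolynomial (Fin 4) k} {c : k}
    (h : euler G = C c * G) (n : ℕ) :
    euler (Omega^[n] G) = C (c - 2 * n) * Omega^[n] G := by
  induction n with
  | zero => simpa using h
  | succ n ih =>
    rw [Function.iterate_succ_apply', euler_Omega ih]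
    congr 2
    push_cast
    ring

lemma Omega_bracket_mul {k : Type*} [CommRing k] (G : MvPolynomial (Fin 4) k) :
    Omega (bracket * G) = euler G + 2 * G + bracket * Omega G := by
  simp [Omega, bracket, euler, Fin.sum_univ_four, pderiv_X]
  ring

lemma Omega_iterate_bracket_mul {k : Type*} [CommRing k] {G : MvPolynomial (Fin 4) k} {c : k}
    (h : euler G = C c * G) (n : ℕ) :
    Omega^[n + 1] (bracket * G)
      = C ((n + 1) * (c - n + 2)) * Omega^[n] G + bracket * Omega^[n + 1] G := by
  induction n with
  | zero =>
    simp only [zero_add, Function.iterate_one, Function.iterate_zero, id, Omega_bracket_mul, h]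
    simp only [map_mul, map_add, map_sub, map_natCast, map_one, map_ofNat]
    push_cast
    ring
  | succ n ih =>
    rw [Function.iterate_succ_apply', ih, Omega_add, Omega_C_mul, Omega_bracket_mul,
      euler_Omega_iterate h, ← Function.iterate_succ_apply' Omega n,
      ← Function.iterate_succ_apply' Omega (n + 1)]
    simp only [map_mul, map_add, map_sub, map_natCast, map_one, map_ofNat]
    push_cast
    ring

lemma Bihomogeneous.euler_eq {k : Type*} [CommRing k] {G : MvPolynomial (Fin 4) k} {p q : ℕ}
    (hG : Bihomogeneous G p q) : euler G = C ((p : k) + q) * G := by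
  have h1 := hG.1.sum_weight_X_mul_pderiv
  have h2 := hG.2.sum_weight_X_mul_pderiv
  simp [Fin.sum_univ_four] at h1 h2
  simp only [euler, Fin.sum_univ_four, map_add, map_natCast]
  linear_combination h1 + h2

/-- Lemma (part b): `Ω_{xy}^ℓ((x y)·𝒢) = ℓ(p+q−ℓ+3)·Ω_{xy}^{ℓ−1}𝒢 + (x y)·Ω_{xy}^ℓ𝒢`
for `𝒢` bihomogeneous of orders `(p,q)` and `ℓ ≥ 1`. -/
theorem omega_pow_bracket_comm {k : Type*} [Field k] [CharZero k]
    (G : MvPolynomial (Fin 4) k) (p q : ℕ) (ℓ : ℕ) (hl : 1 ≤ ℓ)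
    (hG : Bihomogeneous G p q) :
    Omega^[ℓ] (bracket * G)
      = C ((((ℓ : ℤ) * ((p : ℤ) + q - ℓ + 3) : ℤ) : k)) * Omega^[ℓ - 1] G
        + bracket * Omega^[ℓ] G := by
  obtain ⟨n, rfl⟩ := Nat.exists_eq_add_of_le' hl
  rw [Omega_iterate_bracket_mul hG.euler_eq, Nat.add_sub_cancel]
  congr 3
  push_cast
  ring
end
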